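/- Fix an integer m ≥ 1. There exists a constant c > 0 depending only on m such that for every continuous function f : [0,1] → ℝ and every integer n ≥ 1, the bootstrap bias e_m = (I − B_n)^m f satisfies sup_{p∈[0,1]} |e_m(p)| ≤ c ( ω_φ^{2m}(f, 1/√n) + ‖f‖ n^{−m} ). -/

import Mathlib

/-- Bernstein operator: `B_m[g](p) = Σ_{k=0}^m C(m,k) p^k (1-p)^{m-k} g(k/m)`. -/
noncomputable def bernstein' (m : ℕ) (g : ℝ → ℝ) (p : ℝ) : ℝ :=
  ∑ k ∈ Finset.range (m + 1), (m.choose k : ℝ) * p ^ k * (1 - p) ^ (m - k) * g ((k : ℝ) / m)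

/-- Iterated bootstrap bias: `bootIter n f m = (I − B_n)^m f`. -/
noncomputable def bootIter (n : ℕ) (f : ℝ → ℝ) : ℕ → ℝ → ℝ
  | 0 => f
  | m + 1 => fun p => bootIter n f m p - bernstein' n (bootIter n f m) p

/-- `r`-th symmetric difference of `g` with step `h`, vanishing near the boundary of `[0,1]`. -/
noncomputable def ditzSymmDiff (r : ℕ) (h : ℝ) (g : ℝ → ℝ) (x : ℝ) : ℝ :=
  if x - r * h / 2 ∈ Set.Icc (0:ℝ) 1 ∧ x + r * h / 2 ∈ Set.Icc (0:ℝ) 1 then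
    ∑ k ∈ Finset.range (r + 1), (-1 : ℝ) ^ k * (r.choose k : ℝ) * g (x + r * h / 2 - k * h)
  else 0

/-- `r`-th Ditzian–Totik modulus of smoothness with weight `φ(x) = √(x(1-x))`. -/
noncomputable def dtMod (r : ℕ) (g : ℝ → ℝ) (t : ℝ) : ℝ :=
  sSup {y : ℝ | ∃ h x : ℝ, 0 < h ∧ h ≤ t ∧ x ∈ Set.Icc (0:ℝ) 1 ∧
    y = |ditzSymmDiff r (h * Real.sqrt (x * (1 - x))) g x|}

/-- Sup norm on `[0,1]`. -/
noncomputable def supAbsOn (g : ℝ → ℝ) : ℝ := sSup ((fun p => |g p|) '' Set.Icc (0:ℝ) 1)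

section

open Polynomial Finset

/-- The Bernstein operator as a linear map on polynomials. -/
noncomputable def bernOp (n : ℕ) : ℝ[X] →ₗ[ℝ] ℝ[X] :=
  ∑ k ∈ range (n + 1), (leval ((k : ℝ) / n)).smulRight (bernsteinPolynomial ℝ n k)

lemma bernOp_apply (n : ℕ) (q : ℝ[X]) :
    bernOp n q = ∑ k ∈ range (n + 1), q.eval ((k : ℝ) / n) • bernsteinPolynomial ℝ n k := by
  simp [bernOp, leval]

lemma eval_bernsteinPolynomial (n k : ℕ) (x : ℝ) :
    (bernsteinPolynomial ℝ n k).eval x = (n.choose k : ℝ) * x ^ k * (1 - x) ^ (n - k) := by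
  simp [bernsteinPolynomial]

lemma eval_bernOp (n : ℕ) (q : ℝ[X]) (x : ℝ) :
    (bernOp n q).eval x = bernstein' n (fun y => q.eval y) x := by
  rw [bernOp_apply, bernstein', eval_finsetSum]
  refine sum_congr rfl fun k _ => ?_
  rw [eval_smul, eval_bernsteinPolynomial, smul_eq_mul, mul_comm]

/-- The `i`-th central moment of the binomial proportion, as a polynomial in the success
probability. -/
noncomputable def centralMoment' (n i : ℕ) : ℝ[X] :=
  ∑ k ∈ range (n + 1), bernsteinPolynomial ℝ n k * (C ((k : ℝ) / n) - X) ^ i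

lemma X_mul_derivative_bernsteinPolynomial (n k : ℕ) (hk : k ≤ n) :
    X * (1 - X) * derivative (bernsteinPolynomial ℝ n k) =
      (C (k : ℝ) - C (n : ℝ) * X) * bernsteinPolynomial ℝ n k := by
  obtain ⟨j, rfl⟩ := Nat.exists_eq_add_of_le hk
  have hX : X * derivative ((X : ℝ[X]) ^ k) = C (k : ℝ) * X ^ k := by
    rcases k with _ | k
    · simp
    · simp; ring
  have hY : (1 - X) * derivative ((1 - X : ℝ[X]) ^ j) = - C (j : ℝ) * (1 - X) ^ j := by
    rcases j with _ | j
    · simp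
    · rw [derivative_pow]; simp; ring
  have : bernsteinPolynomial ℝ (k + j) k =
      C (((k + j).choose k : ℕ) : ℝ) * (X ^ k * (1 - X) ^ j) := by
    simp [bernsteinPolynomial, mul_assoc]
  rw [this, derivative_C_mul, derivative_mul]
  simp only [Nat.cast_add, C_add]
  linear_combination (C (((k + j).choose k : ℕ) : ℝ)) * ((1 - X) * (1 - X) ^ j * hX + X * X ^ k * hY)

lemma centralMoment'_zero (n : ℕ) : centralMoment' n 0 = 1 := by
  simp [centralMoment', bernsteinPolynomial.sum]

lemma centralMoment'_succ (n i : ℕ) (hn : 1 ≤ n) :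
    centralMoment' n (i + 1) = C (1 / (n : ℝ)) * (X * (1 - X)) *
      (derivative (centralMoment' n i) + C (i : ℝ) * centralMoment' n (i - 1)) := by
  simp only [centralMoment', derivative_sum, mul_sum, ← sum_add_distrib]
  refine sum_congr rfl fun k hk => ?_
  have hk' : k ≤ n := Nat.lt_succ_iff.mp (mem_range.mp hk)
  have h := X_mul_derivative_bernsteinPolynomial n k hk'
  have hn0 : (n : ℝ) ≠ 0 := by positivity
  have hc : C (k : ℝ) = C (n : ℝ) * C ((k : ℝ) / n) := by rw [← C_mul]; congr 1; field_simp
  have h1 : C (1 / (n : ℝ)) * C (n : ℝ) = 1 := by rw [← C_mul, one_div_mul_cancel hn0, C_1]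
  have hd : derivative ((C ((k : ℝ) / n) - X : ℝ[X]) ^ i) =
      - (C (i : ℝ) * (C ((k : ℝ) / n) - X) ^ (i - 1)) := by
    rw [derivative_pow]; simp
  rw [derivative_mul, hd]
  rw [hc] at h
  generalize C ((k : ℝ) / n) = c at *
  generalize bernsteinPolynomial ℝ n k = b at *
  have : C (1 / (n : ℝ)) * (X * (1 - X) * derivative b) = (c - X) * b := by
    rw [h, show (C (n : ℝ) * c - C (n : ℝ) * X) * b = C (n : ℝ) * ((c - X) * b) by ring,
      ← mul_assoc, h1, one_mul]
  linear_combination -(c - X) ^ i * this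

lemma centralMoment'_one (n : ℕ) (hn : 1 ≤ n) : centralMoment' n 1 = 0 := by
  rw [centralMoment'_succ n 0 hn, centralMoment'_zero]; simp

lemma natDegree_centralMoment'_le (n : ℕ) (hn : 1 ≤ n) :
    ∀ i, (centralMoment' n i).natDegree ≤ i := by
  intro i
  induction i using Nat.strong_induction_on with
  | _ i ih =>
    rcases i with _ | _ | i
    · simp [centralMoment'_zero]
    · simp [centralMoment'_one n hn]
    · rw [centralMoment'_succ n (i + 1) hn, mul_assoc]
      refine (natDegree_C_mul_le _ _).trans (natDegree_mul_le.trans ?_)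
      have h1 : (X * (1 - X) : ℝ[X]).natDegree ≤ 2 := by compute_degree
      have h2 : (derivative (centralMoment' n (i + 1)) +
          C ((i + 1 : ℕ) : ℝ) * centralMoment' n (i + 1 - 1)).natDegree ≤ i := by
        refine natDegree_add_le_of_degree_le ?_ ?_
        · have := ih (i + 1) (by omega)
          exact (natDegree_derivative_le _).trans (by omega)
        · exact (natDegree_C_mul_le _ _).trans (ih i (by omega))
      omega

lemma eval_eq_sum_hasseDeriv (q : ℝ[X]) (J : ℕ) (hJ : q.natDegree ≤ J) (x y : ℝ) :
    q.eval y = ∑ i ∈ range (J + 1), (hasseDeriv i q).eval x * (y - x) ^ i := by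
  have h : q.eval y = (taylor x q).eval (y - x) := by rw [taylor_eval]; simp
  rw [h, eval_eq_sum_range' (n := J + 1) (by rw [natDegree_taylor]; omega)]
  simp [taylor_coeff]

lemma bernOp_eq_sum (n : ℕ) (q : ℝ[X]) (J : ℕ) (hJ : q.natDegree ≤ J) :
    bernOp n q = ∑ i ∈ range (J + 1), centralMoment' n i * hasseDeriv i q := by
  refine Polynomial.funext fun x => ?_
  rw [bernOp_apply]
  simp only [centralMoment', eval_finsetSum, eval_smul, smul_eq_mul, eval_mul, sum_mul]
  rw [sum_comm]
  refine sum_congr rfl fun k _ => ?_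
  rw [eval_eq_sum_hasseDeriv q J hJ x, sum_mul]
  refine sum_congr rfl fun i _ => ?_
  simp; ring

lemma natDegree_bernOp_le (n : ℕ) (hn : 1 ≤ n) (q : ℝ[X]) (J : ℕ) (hJ : q.natDegree ≤ J) :
    (bernOp n q).natDegree ≤ J := by
  rw [bernOp_eq_sum n q J hJ]
  refine natDegree_sum_le_of_forall_le _ _ fun i hi => ?_
  have h1 := natDegree_centralMoment'_le n hn i
  have h2 := natDegree_hasseDeriv_le q i
  have h3 := mem_range.mp hi
  rcases lt_or_ge q.natDegree i with h | h
  · simp [hasseDeriv_eq_zero_of_lt_natDegree q i h]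
  · exact natDegree_mul_le.trans (by omega)

lemma one_sub_bernOp_eq_sum (n : ℕ) (hn : 1 ≤ n) (q : ℝ[X]) (J : ℕ) (hJ : q.natDegree ≤ J) :
    q - bernOp n q =
      - ∑ i ∈ range J, centralMoment' n (i + 2) * hasseDeriv (i + 2) q := by
  rw [bernOp_eq_sum n q (J + 1) (by omega), sum_range_succ', sum_range_succ']
  simp [centralMoment'_zero, centralMoment'_one n hn]

/-- A family of polynomials whose Taylor coefficients of order `k` at the points `c i` are
bounded by a constant multiple of `σ i * ρ i ^ (w - k)`, with truncated subtraction. -/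
def TaylorBdd {ι : Type*} (c ρ σ : ι → ℝ) (w : ℕ) (q : ι → ℝ[X]) : Prop :=
  ∀ k, ∃ A : ℝ, 0 ≤ A ∧ ∀ i, |(taylor (c i) (q i)).coeff k| ≤ A * (σ i * ρ i ^ (w - k))

namespace TaylorBdd

variable {ι : Type*} {c ρ σ τ : ι → ℝ} {v w : ℕ} {p q : ι → ℝ[X]}

lemma add (hp : TaylorBdd c ρ σ w p) (hq : TaylorBdd c ρ σ w q) :
    TaylorBdd c ρ σ w (fun i => p i + q i) := by
  intro k
  obtain ⟨A, hA, h⟩ := hp k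
  obtain ⟨B, hB, h'⟩ := hq k
  refine ⟨A + B, add_nonneg hA hB, fun i => ?_⟩
  simp only [map_add, coeff_add]
  exact (abs_add_le _ _).trans (by linarith [h i, h' i])

lemma neg (hp : TaylorBdd c ρ σ w p) : TaylorBdd c ρ σ w (fun i => - p i) := by
  intro k
  obtain ⟨A, hA, h⟩ := hp k
  exact ⟨A, hA, fun i => by simpa using h i⟩

lemma zero : TaylorBdd c ρ σ w (fun _ => 0) :=
  fun _ => ⟨0, le_rfl, fun i => by simp⟩

lemma sum {κ : Type*} (s : Finset κ) {f : κ → ι → ℝ[X]}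
    (h : ∀ j ∈ s, TaylorBdd c ρ σ w (f j)) : TaylorBdd c ρ σ w (fun i => ∑ j ∈ s, f j i) := by
  classical
  induction s using Finset.induction_on with
  | empty => simpa using zero
  | insert j s hj ih =>
    simp only [sum_insert hj]
    exact (h j (mem_insert_self _ _)).add (ih fun l hl => h l (mem_insert_of_mem hl))

lemma mono (h : TaylorBdd c ρ σ w q) (hσ : ∀ i, 0 ≤ σ i) (hρ : ∀ i, 0 ≤ ρ i)
    (hρ' : ∀ i, ρ i ≤ 2) (hστ : ∀ i, σ i ≤ τ i) (hv : v ≤ w) : TaylorBdd c ρ τ v q := by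
  intro k
  obtain ⟨A, hA, h⟩ := h k
  refine ⟨A * 2 ^ ((w - k) - (v - k)), by positivity, fun i => (h i).trans ?_⟩
  rw [mul_assoc]
  refine mul_le_mul_of_nonneg_left ?_ hA
  have e : w - k = ((w - k) - (v - k)) + (v - k) := by omega
  have h1 : ρ i ^ (w - k) ≤ 2 ^ ((w - k) - (v - k)) * ρ i ^ (v - k) := by
    conv_lhs => rw [e, pow_add]
    exact mul_le_mul_of_nonneg_right (pow_le_pow_left₀ (hρ i) (hρ' i) _) (pow_nonneg (hρ i) _)
  calc σ i * ρ i ^ (w - k) ≤ τ i * (2 ^ ((w - k) - (v - k)) * ρ i ^ (v - k)) :=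
        mul_le_mul (hστ i) h1 (pow_nonneg (hρ i) _) ((hσ i).trans (hστ i))
    _ = _ := by ring

lemma mul (hp : TaylorBdd c ρ σ v p) (hq : TaylorBdd c ρ τ w q) (hσ : ∀ i, 0 ≤ σ i)
    (hτ : ∀ i, 0 ≤ τ i) (hρ : ∀ i, 0 ≤ ρ i) (hρ' : ∀ i, ρ i ≤ 2) :
    TaylorBdd c ρ (fun i => σ i * τ i) (v + w) (fun i => p i * q i) := by
  intro k
  choose A hA h using hp
  choose B hB h' using hq
  refine ⟨∑ x ∈ antidiagonal k, A x.1 * B x.2 * 2 ^ ((v - x.1 + (w - x.2)) - (v + w - k)),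
    sum_nonneg fun x _ => mul_nonneg (mul_nonneg (hA _) (hB _)) (by positivity), fun i => ?_⟩
  rw [taylor_mul, coeff_mul, sum_mul]
  refine (abs_sum_le_sum_abs _ _).trans (sum_le_sum fun x hx => ?_)
  have hx' := mem_antidiagonal.mp hx
  rw [abs_mul]
  refine (mul_le_mul (h x.1 i) (h' x.2 i) (abs_nonneg _)
    (mul_nonneg (hA _) (mul_nonneg (hσ i) (pow_nonneg (hρ i) _)))).trans ?_
  have e : v - x.1 + (w - x.2) = ((v - x.1 + (w - x.2)) - (v + w - k)) + (v + w - k) := by omega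
  have h1 : ρ i ^ (v - x.1) * ρ i ^ (w - x.2) ≤
      2 ^ ((v - x.1 + (w - x.2)) - (v + w - k)) * ρ i ^ (v + w - k) := by
    conv_lhs => rw [← pow_add, e, pow_add]
    exact mul_le_mul_of_nonneg_right (pow_le_pow_left₀ (hρ i) (hρ' i) _) (pow_nonneg (hρ i) _)
  calc A x.1 * (σ i * ρ i ^ (v - x.1)) * (B x.2 * (τ i * ρ i ^ (w - x.2)))
      = A x.1 * B x.2 * (σ i * τ i) * (ρ i ^ (v - x.1) * ρ i ^ (w - x.2)) := by ring
    _ ≤ A x.1 * B x.2 * (σ i * τ i) *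
        (2 ^ ((v - x.1 + (w - x.2)) - (v + w - k)) * ρ i ^ (v + w - k)) :=
        mul_le_mul_of_nonneg_left h1
          (mul_nonneg (mul_nonneg (hA _) (hB _)) (mul_nonneg (hσ i) (hτ i)))
    _ = _ := by ring

lemma hasseDeriv (h : TaylorBdd c ρ σ w q) (j : ℕ) :
    TaylorBdd c ρ σ (w - j) (fun i => hasseDeriv j (q i)) := by
  intro k
  obtain ⟨A, hA, h⟩ := h (k + j)
  refine ⟨((k + j).choose k : ℝ) * A, by positivity, fun i => ?_⟩
  have hc : Polynomial.hasseDeriv k (Polynomial.hasseDeriv j (q i)) =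
      (k + j).choose k • Polynomial.hasseDeriv (k + j) (q i) := by
    have := congrArg (fun L : ℝ[X] →ₗ[ℝ] ℝ[X] => L (q i)) (hasseDeriv_comp (R := ℝ) k j)
    simpa using this
  rw [taylor_coeff, hc, eval_smul, nsmul_eq_mul, abs_mul, Nat.abs_cast, mul_assoc,
    ← taylor_coeff, Nat.sub_sub, Nat.add_comm j k]
  exact mul_le_mul_of_nonneg_left (h i) (Nat.cast_nonneg _)

lemma derivative (h : TaylorBdd c ρ σ w q) :
    TaylorBdd c ρ σ (w - 1) (fun i => derivative (q i)) := by
  simpa [hasseDeriv_one] using h.hasseDeriv 1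

lemma C_mul (h : TaylorBdd c ρ σ w q) (a : ℝ) : TaylorBdd c ρ σ w (fun i => C a * q i) := by
  intro k
  obtain ⟨A, hA, h⟩ := h k
  refine ⟨|a| * A, by positivity, fun i => ?_⟩
  rw [taylor_mul, taylor_C, coeff_C_mul, abs_mul, mul_assoc]
  exact mul_le_mul_of_nonneg_left (h i) (abs_nonneg _)

lemma X_sub_C_pow (hρ : ∀ i, 0 ≤ ρ i) (j : ℕ) :
    TaylorBdd c ρ (fun _ => 1) j (fun i => (X - C (c i)) ^ j) := by
  intro k
  refine ⟨1, zero_le_one, fun i => ?_⟩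
  have : taylor (c i) ((X - C (c i)) ^ j) = X ^ j := by
    rw [taylor_pow]; simp
  rw [this, coeff_X_pow]
  split_ifs with h
  · simp [h]
  · simpa using pow_nonneg (hρ i) _

lemma one (hρ : ∀ i, 0 ≤ ρ i) : TaylorBdd c ρ (fun _ => 1) 0 (fun _ => 1) := by
  simpa using X_sub_C_pow (c := c) hρ 0

end TaylorBdd

/-- Pairs of a positive sample size and a success probability. -/
abbrev BinomialParam : Type := {p : ℕ × ℝ // 1 ≤ p.1 ∧ p.2 ∈ Set.Icc (0 : ℝ) 1}

/-- The regularized variance `x (1 - x) + 1 / n`. -/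
noncomputable def regVar (n : ℕ) (x : ℝ) : ℝ := x * (1 - x) + 1 / n

lemma one_div_le_regVar (n : ℕ) {x : ℝ} (hx : x ∈ Set.Icc (0 : ℝ) 1) :
    1 / (n : ℝ) ≤ regVar n x := by
  have := mul_nonneg hx.1 (sub_nonneg.mpr hx.2)
  unfold regVar; linarith

lemma regVar_pos {n : ℕ} (hn : 1 ≤ n) {x : ℝ} (hx : x ∈ Set.Icc (0 : ℝ) 1) : 0 < regVar n x :=
  lt_of_lt_of_le (by positivity) (one_div_le_regVar n hx)

lemma one_div_natCast_le_one {n : ℕ} (hn : 1 ≤ n) : 1 / (n : ℝ) ≤ 1 := by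
  rw [div_le_one (by positivity)]; exact_mod_cast hn

lemma regVar_le_two {n : ℕ} (hn : 1 ≤ n) {x : ℝ} (hx : x ∈ Set.Icc (0 : ℝ) 1) :
    regVar n x ≤ 2 := by
  have := one_div_natCast_le_one hn
  unfold regVar; nlinarith [hx.1, hx.2]

lemma regVar_div_nonneg {n : ℕ} (hn : 1 ≤ n) {x : ℝ} (hx : x ∈ Set.Icc (0 : ℝ) 1) :
    0 ≤ regVar n x / n := div_nonneg (regVar_pos hn hx).le (Nat.cast_nonneg _)

lemma sqrt_regVar_div_le_two {n : ℕ} (hn : 1 ≤ n) {x : ℝ} (hx : x ∈ Set.Icc (0 : ℝ) 1) :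
    √(regVar n x / n) ≤ 2 := by
  rw [Real.sqrt_le_left (by norm_num)]
  have h1 : regVar n x / n ≤ regVar n x :=
    div_le_self (regVar_pos hn hx).le (by exact_mod_cast hn)
  linarith [regVar_le_two hn hx]

lemma taylorBdd_variance {ρ σ : BinomialParam → ℝ} {w : ℕ}
    (h0 : ∀ i, 1 / (i.1.1 : ℝ) * (i.1.2 * (1 - i.1.2)) ≤ σ i * ρ i ^ w)
    (h1 : ∀ i, 1 / (i.1.1 : ℝ) ≤ σ i * ρ i ^ (w - 1))
    (h2 : ∀ i, 1 / (i.1.1 : ℝ) ≤ σ i * ρ i ^ (w - 2)) (h3 : ∀ i k, 0 ≤ σ i * ρ i ^ k) :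
    TaylorBdd (fun i : BinomialParam => i.1.2) ρ σ w
      (fun i => C (1 / (i.1.1 : ℝ)) * (X * (1 - X))) := by
  intro k
  refine ⟨1, zero_le_one, fun i => ?_⟩
  obtain ⟨⟨n, x⟩, hn, hx⟩ := i
  have e : taylor x (C (1 / (n : ℝ)) * (X * (1 - X)) : ℝ[X]) =
      C (1 / (n : ℝ)) * (C (x * (1 - x)) + C (1 - 2 * x) * X - X ^ 2) := by
    simp only [taylor_mul, taylor_C, map_sub, taylor_X, taylor_one]
    simp only [C_mul, C_sub, C_1, C_ofNat]
    ring
  have hpos : 0 ≤ 1 / (n : ℝ) := by positivity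
  have hxx : 0 ≤ x * (1 - x) := mul_nonneg hx.1 (sub_nonneg.mpr hx.2)
  rw [one_mul]
  simp only
  rw [e, coeff_C_mul]
  rcases k with _ | _ | _ | k
  · simp only [coeff_sub, coeff_add, coeff_C_zero, coeff_C_mul, coeff_X_zero, coeff_X_pow]
    simp only [mul_zero, add_zero, OfNat.zero_ne_ofNat, if_false, sub_zero]
    rw [abs_of_nonneg (mul_nonneg hpos hxx)]
    exact h0 ⟨(n, x), hn, hx⟩
  · have : |1 - 2 * x| ≤ 1 := abs_le.mpr ⟨by linarith [hx.2], by linarith [hx.1]⟩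
    have := mul_le_mul_of_nonneg_left this hpos
    simp only [coeff_sub, coeff_add, coeff_C_mul, coeff_X_pow, coeff_C_succ, coeff_X_one, zero_add]
    norm_num [abs_mul, abs_of_nonneg] at this ⊢
    exact this.trans (by simpa using h1 ⟨(n, x), hn, hx⟩)
  · simp only [coeff_sub, coeff_add, coeff_C_mul, coeff_X_pow, coeff_C_succ, zero_add, coeff_X]
    norm_num
    simpa using h2 ⟨(n, x), hn, hx⟩
  · simp only [coeff_sub, coeff_add, coeff_C_mul, coeff_X_pow, coeff_C_succ, coeff_X]
    have := h3 ⟨(n, x), hn, hx⟩ (w - (k + 3))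
    simpa using this

lemma TaylorBdd.centralMoment' {ρ : BinomialParam → ℝ} (hρ : ∀ i, 0 ≤ ρ i) (hρ' : ∀ i, ρ i ≤ 2)
    (hV : TaylorBdd (fun i : BinomialParam => i.1.2) ρ (fun _ => 1) 2
      (fun i => C (1 / (i.1.1 : ℝ)) * (X * (1 - X)))) (j : ℕ) :
    TaylorBdd (fun i : BinomialParam => i.1.2) ρ (fun _ => 1) j
      (fun i => centralMoment' i.1.1 j) := by
  induction j using Nat.strong_induction_on with
  | _ j ih =>
    rcases j with _ | _ | j
    · simpa only [centralMoment'_zero] using TaylorBdd.one hρ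
    · have : (fun i : BinomialParam => _root_.centralMoment' i.1.1 (0 + 1)) = fun _ => 0 :=
        funext fun i => centralMoment'_one _ i.2.1
      rw [this]; exact TaylorBdd.zero
    · have h := hV.mul (((ih (j + 1) (by omega)).derivative).add
        ((ih j (by omega)).C_mul ((j + 1 : ℕ) : ℝ)))
        (fun _ => zero_le_one) (fun _ => zero_le_one) hρ hρ'
      have : (fun i : BinomialParam => _root_.centralMoment' i.1.1 (j + 1 + 1)) = _ :=
        funext fun i => centralMoment'_succ _ (j + 1) i.2.1
      rw [this]
      exact h.mono (fun _ => by norm_num) hρ hρ' (fun _ => by norm_num) (by omega)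

lemma TaylorBdd.centralMoment'_inv {ρ : BinomialParam → ℝ} (hρ : ∀ i, 0 ≤ ρ i)
    (hρ' : ∀ i, ρ i ≤ 2)
    (hV : TaylorBdd (fun i : BinomialParam => i.1.2) ρ (fun _ => 1) 2
      (fun i => C (1 / (i.1.1 : ℝ)) * (X * (1 - X))))
    (hV' : TaylorBdd (fun i : BinomialParam => i.1.2) ρ (fun i => 1 / (i.1.1 : ℝ)) 1
      (fun i => C (1 / (i.1.1 : ℝ)) * (X * (1 - X)))) (j : ℕ) :
    TaylorBdd (fun i : BinomialParam => i.1.2) ρ (fun i => 1 / (i.1.1 : ℝ)) j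
      (fun i => _root_.centralMoment' i.1.1 (j + 1)) := by
  have hσ : ∀ i : BinomialParam, 0 ≤ 1 / (i.1.1 : ℝ) := fun i => by positivity
  induction j using Nat.strong_induction_on with
  | _ j ih =>
    rcases j with _ | _ | j
    · have : (fun i : BinomialParam => _root_.centralMoment' i.1.1 (0 + 1)) = fun _ => 0 :=
        funext fun i => centralMoment'_one _ i.2.1
      rw [this]; exact TaylorBdd.zero
    · have : (fun i : BinomialParam => _root_.centralMoment' i.1.1 (0 + 1 + 1)) =
          fun i => C (1 / (i.1.1 : ℝ)) * (X * (1 - X)) := funext fun i => by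
        rw [centralMoment'_succ _ 1 i.2.1, centralMoment'_one _ i.2.1, centralMoment'_zero]
        simp
      rw [this]; exact hV'
    · have h := hV.mul (((ih (j + 1) (by omega)).derivative).add
        ((ih j (by omega)).C_mul ((j + 1 + 1 : ℕ) : ℝ))) (fun _ => zero_le_one) hσ hρ hρ'
      have : (fun i : BinomialParam => _root_.centralMoment' i.1.1 (j + 1 + 1 + 1)) = _ :=
        funext fun i => centralMoment'_succ _ (j + 1 + 1) i.2.1
      rw [this]
      exact h.mono (fun i => by simp) hρ hρ' (fun _ => by norm_num) (by omega)

lemma taylorBdd_variance_regVar :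
    TaylorBdd (fun i : BinomialParam => i.1.2) (fun i => regVar i.1.1 i.1.2) (fun _ => 1) 2
      (fun i => C (1 / (i.1.1 : ℝ)) * (X * (1 - X))) := by
  refine taylorBdd_variance (fun i => ?_) (fun i => ?_) (fun i => ?_) (fun i k => ?_)
  all_goals
    obtain ⟨⟨n, x⟩, hn, hx⟩ := i
    have h1 := one_div_le_regVar n hx
    have h2 := regVar_pos hn hx
    have h3 : 0 < 1 / (n : ℝ) := by positivity
  · have h4 : x * (1 - x) ≤ regVar n x := by unfold regVar; linarith
    have := mul_le_mul h1 h4 (mul_nonneg hx.1 (sub_nonneg.mpr hx.2)) h2.le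
    simpa [sq] using this
  · simpa using h1
  · simpa using one_div_natCast_le_one hn
  · positivity

lemma taylorBdd_variance_regVar_inv :
    TaylorBdd (fun i : BinomialParam => i.1.2) (fun i => regVar i.1.1 i.1.2)
      (fun i => 1 / (i.1.1 : ℝ)) 1 (fun i => C (1 / (i.1.1 : ℝ)) * (X * (1 - X))) := by
  refine taylorBdd_variance (fun i => ?_) (fun i => ?_) (fun i => ?_) (fun i k => ?_)
  all_goals
    obtain ⟨⟨n, x⟩, hn, hx⟩ := i
    have h2 := regVar_pos hn hx
    have h3 : 0 < 1 / (n : ℝ) := by positivity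
  · have h4 : x * (1 - x) ≤ regVar n x := by unfold regVar; linarith
    simpa using mul_le_mul_of_nonneg_left h4 h3.le
  · simp
  · simp
  · positivity

lemma taylorBdd_variance_sqrt :
    TaylorBdd (fun i : BinomialParam => i.1.2) (fun i => √(regVar i.1.1 i.1.2 / i.1.1))
      (fun _ => 1) 2 (fun i => C (1 / (i.1.1 : ℝ)) * (X * (1 - X))) := by
  refine taylorBdd_variance (fun i => ?_) (fun i => ?_) (fun i => ?_) (fun i k => ?_)
  all_goals
    obtain ⟨⟨n, x⟩, hn, hx⟩ := i
    have h1 := one_div_le_regVar n hx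
    have h2 := regVar_pos hn hx
    have h3 : 0 < 1 / (n : ℝ) := by positivity
  · have h4 : x * (1 - x) ≤ regVar n x := by unfold regVar; linarith
    have := mul_le_mul_of_nonneg_left h4 h3.le
    simp only [one_mul]
    rw [Real.sq_sqrt (regVar_div_nonneg hn hx)]
    exact this.trans_eq (by ring)
  · simp only [one_mul, Nat.add_one_sub_one, pow_one]
    refine Real.le_sqrt_of_sq_le ?_
    rw [div_eq_mul_one_div (regVar n x), sq]
    exact mul_le_mul_of_nonneg_right h1 h3.le
  · simpa using one_div_natCast_le_one hn
  · positivity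

lemma TaylorBdd.bernOp {σ : BinomialParam → ℝ} {w J : ℕ} {q : BinomialParam → ℝ[X]}
    (hσ : ∀ i, 0 ≤ σ i) (hq : ∀ i, (q i).natDegree ≤ J)
    (h : TaylorBdd (fun i : BinomialParam => i.1.2) (fun i => √(regVar i.1.1 i.1.2 / i.1.1)) σ w q) :
    TaylorBdd (fun i : BinomialParam => i.1.2) (fun i => √(regVar i.1.1 i.1.2 / i.1.1)) σ w
      (fun i => bernOp i.1.1 (q i)) := by
  have hρ : ∀ i : BinomialParam, 0 ≤ √(regVar i.1.1 i.1.2 / i.1.1) := fun i => Real.sqrt_nonneg _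
  have hρ' : ∀ i : BinomialParam, √(regVar i.1.1 i.1.2 / i.1.1) ≤ 2 :=
    fun i => sqrt_regVar_div_le_two i.2.1 i.2.2
  simp only [fun i : BinomialParam => bernOp_eq_sum i.1.1 (q i) J (hq i)]
  refine TaylorBdd.sum _ fun j _ => ?_
  refine ((TaylorBdd.centralMoment' hρ hρ' taylorBdd_variance_sqrt j).mul (h.hasseDeriv j)
    (fun _ => zero_le_one) hσ hρ hρ').mono (fun i => by simpa using hσ i) hρ hρ'
    (fun i => by simp) (by omega)

lemma TaylorBdd.one_sub_bernOp {σ : BinomialParam → ℝ} {w J : ℕ} {q : BinomialParam → ℝ[X]}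
    (hσ : ∀ i, 0 ≤ σ i) (hq : ∀ i, (q i).natDegree ≤ J)
    (h : TaylorBdd (fun i : BinomialParam => i.1.2) (fun i => regVar i.1.1 i.1.2) σ w q) :
    TaylorBdd (fun i : BinomialParam => i.1.2) (fun i => regVar i.1.1 i.1.2)
      (fun i => 1 / (i.1.1 : ℝ) * σ i) (max (w - 1) 1)
      (fun i => q i - _root_.bernOp i.1.1 (q i)) := by
  have hρ : ∀ i : BinomialParam, 0 ≤ regVar i.1.1 i.1.2 := fun i => (regVar_pos i.2.1 i.2.2).le
  have hρ' : ∀ i : BinomialParam, regVar i.1.1 i.1.2 ≤ 2 := fun i => regVar_le_two i.2.1 i.2.2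
  have hn : ∀ i : BinomialParam, 0 ≤ 1 / (i.1.1 : ℝ) := fun i => by positivity
  simp only [fun i : BinomialParam => one_sub_bernOp_eq_sum i.1.1 i.2.1 (q i) J (hq i)]
  refine (TaylorBdd.sum _ fun j _ => ?_).neg
  exact ((TaylorBdd.centralMoment'_inv hρ hρ' taylorBdd_variance_regVar
    taylorBdd_variance_regVar_inv (j + 1)).mul (h.hasseDeriv (j + 2))
    hn hσ hρ hρ').mono (fun i => mul_nonneg (hn i) (hσ i)) hρ hρ' (fun i => le_rfl) (by omega)

lemma natDegree_one_sub_bernOp_pow_le {n : ℕ} (hn : 1 ≤ n) (s : ℕ) (q : ℝ[X]) (J : ℕ)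
    (hJ : q.natDegree ≤ J) : (((1 - bernOp n) ^ s : Module.End ℝ ℝ[X]) q).natDegree ≤ J := by
  induction s with
  | zero => simpa using hJ
  | succ s ih =>
    rw [pow_succ', Module.End.mul_apply]
    exact (natDegree_sub_le _ _).trans (max_le ih (natDegree_bernOp_le n hn _ J ih))

lemma natDegree_one_add_bernOp_pow_le {n : ℕ} (hn : 1 ≤ n) (s : ℕ) (q : ℝ[X]) (J : ℕ)
    (hJ : q.natDegree ≤ J) : (((1 + bernOp n) ^ s : Module.End ℝ ℝ[X]) q).natDegree ≤ J := by
  induction s with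
  | zero => simpa using hJ
  | succ s ih =>
    rw [pow_succ', Module.End.mul_apply]
    exact (natDegree_add_le _ _).trans (max_le ih (natDegree_bernOp_le n hn _ J ih))

/-- The iterated bias of a centred monomial. -/
lemma exists_abs_eval_one_sub_bernOp_pow_le (m j : ℕ) : ∃ A : ℝ, 0 ≤ A ∧
    ∀ n : ℕ, 1 ≤ n → ∀ x ∈ Set.Icc (0 : ℝ) 1,
      |(((1 - bernOp n) ^ (m + 1) : Module.End ℝ ℝ[X]) ((X - C x) ^ j)).eval x| ≤
        A * ((1 / (n : ℝ)) ^ (m + 1) * regVar n x ^ max (j - (m + 1)) 1) := by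
  have hρ : ∀ i : BinomialParam, 0 ≤ regVar i.1.1 i.1.2 := fun i => (regVar_pos i.2.1 i.2.2).le
  have hdeg : ∀ x : ℝ, ((X - C x) ^ j : ℝ[X]).natDegree ≤ j := fun x => by simp
  have key : ∀ s, TaylorBdd (fun i : BinomialParam => i.1.2) (fun i => regVar i.1.1 i.1.2)
      (fun i => (1 / (i.1.1 : ℝ)) ^ (s + 1)) (max (j - (s + 1)) 1)
      (fun i => ((1 - bernOp i.1.1) ^ (s + 1) : Module.End ℝ ℝ[X]) ((X - C i.1.2) ^ j)) := by
    intro s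
    induction s with
    | zero =>
      have := TaylorBdd.one_sub_bernOp (fun _ => zero_le_one) (fun i => hdeg i.1.2)
        (TaylorBdd.X_sub_C_pow hρ j)
      simpa using this
    | succ s ih =>
      have := TaylorBdd.one_sub_bernOp (fun i => by positivity)
        (fun i => natDegree_one_sub_bernOp_pow_le i.2.1 (s + 1) _ j (hdeg i.1.2)) ih
      simp only [← pow_succ'] at this
      simp only [pow_succ' _ (s + 1), Module.End.mul_apply]
      simp only [pow_succ' _ (s + 1)] at this
      rwa [show max (max (j - (s + 1)) 1 - 1) 1 = max (j - (s + 1 + 1)) 1 by omega] at this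
  obtain ⟨A, hA, h⟩ := key m 0
  refine ⟨A, hA, fun n hn x hx => ?_⟩
  have := h ⟨(n, x), hn, hx⟩
  rwa [taylor_coeff_zero, Nat.sub_zero] at this

lemma exists_abs_eval_one_add_bernOp_pow_le (m j : ℕ) : ∃ A : ℝ, 0 ≤ A ∧
    ∀ n : ℕ, 1 ≤ n → ∀ x ∈ Set.Icc (0 : ℝ) 1,
      |(((1 + bernOp n) ^ m : Module.End ℝ ℝ[X]) ((X - C x) ^ j)).eval x| ≤
        A * √(regVar n x / n) ^ j := by
  have hdeg : ∀ x : ℝ, ((X - C x) ^ j : ℝ[X]).natDegree ≤ j := fun x => by simp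
  have key : ∀ s, TaylorBdd (fun i : BinomialParam => i.1.2)
      (fun i => √(regVar i.1.1 i.1.2 / i.1.1)) (fun _ => 1) j
      (fun i => ((1 + bernOp i.1.1) ^ s : Module.End ℝ ℝ[X]) ((X - C i.1.2) ^ j)) := by
    intro s
    induction s with
    | zero =>
      simpa only [pow_zero, Module.End.one_apply] using
        TaylorBdd.X_sub_C_pow (fun i => Real.sqrt_nonneg _) j
    | succ s ih =>
      simp only [pow_succ', Module.End.mul_apply]
      exact ih.add (TaylorBdd.bernOp (fun _ => zero_le_one)
        (fun i => natDegree_one_add_bernOp_pow_le i.2.1 s _ j (hdeg i.1.2)) ih)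
  obtain ⟨A, hA, h⟩ := key m 0
  refine ⟨A, hA, fun n hn x hx => ?_⟩
  have := h ⟨(n, x), hn, hx⟩
  rwa [taylor_coeff_zero, Nat.sub_zero, one_mul] at this

lemma bootIter_eval (n : ℕ) (q : ℝ[X]) (m : ℕ) :
    bootIter n (fun y => q.eval y) m =
      fun x => (((1 - bernOp n) ^ m : Module.End ℝ ℝ[X]) q).eval x := by
  induction m with
  | zero => simp [bootIter]
  | succ m ih =>
    funext x
    rw [bootIter, ih, pow_succ', Module.End.mul_apply, LinearMap.sub_apply, eval_sub, eval_bernOp]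
    rfl

lemma bernstein'_sub (n : ℕ) (f g : ℝ → ℝ) (x : ℝ) :
    bernstein' n (fun y => f y - g y) x = bernstein' n f x - bernstein' n g x := by
  simp only [bernstein', mul_sub, sum_sub_distrib]

lemma bootIter_sub (n : ℕ) (f g : ℝ → ℝ) (m : ℕ) :
    bootIter n (fun y => f y - g y) m = fun x => bootIter n f m x - bootIter n g m x := by
  induction m with
  | zero => rfl
  | succ m ih =>
    funext x
    simp only [bootIter, ih, bernstein'_sub]
    ring

lemma natCast_div_mem_Icc {k n : ℕ} (hk : k ∈ range (n + 1)) :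
    ((k : ℝ) / n) ∈ Set.Icc (0 : ℝ) 1 := by
  have hk' : (k : ℝ) ≤ n := by exact_mod_cast Nat.lt_succ_iff.mp (mem_range.mp hk)
  exact ⟨by positivity, div_le_one_of_le₀ hk' (Nat.cast_nonneg _)⟩

lemma abs_bernstein'_le (n : ℕ) {f g : ℝ → ℝ} (h : ∀ y ∈ Set.Icc (0 : ℝ) 1, |f y| ≤ g y) {x : ℝ}
    (hx : x ∈ Set.Icc (0 : ℝ) 1) : |bernstein' n f x| ≤ bernstein' n g x := by
  refine (abs_sum_le_sum_abs _ _).trans (sum_le_sum fun k hk => ?_)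
  have h0 : 0 ≤ (n.choose k : ℝ) * x ^ k * (1 - x) ^ (n - k) :=
    mul_nonneg (mul_nonneg (Nat.cast_nonneg _) (pow_nonneg hx.1 _))
      (pow_nonneg (sub_nonneg.mpr hx.2) _)
  rw [abs_mul, abs_of_nonneg h0]
  exact mul_le_mul_of_nonneg_left (h _ (natCast_div_mem_Icc hk)) h0

lemma abs_bootIter_le (n : ℕ) {f : ℝ → ℝ} {q : ℝ[X]}
    (h : ∀ y ∈ Set.Icc (0 : ℝ) 1, |f y| ≤ q.eval y) (m : ℕ) :
    ∀ x ∈ Set.Icc (0 : ℝ) 1,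
      |bootIter n f m x| ≤ (((1 + bernOp n) ^ m : Module.End ℝ ℝ[X]) q).eval x := by
  induction m with
  | zero => simpa [bootIter] using h
  | succ m ih =>
    intro x hx
    rw [bootIter, pow_succ', Module.End.mul_apply, LinearMap.add_apply, eval_add, eval_bernOp]
    exact (abs_sub _ _).trans (add_le_add (ih x hx) (abs_bernstein'_le n ih hx))

/-! ### Polynomial bounds -/

lemma hasseDeriv_eval_eq_zero {D : ℝ[X]} {J j : ℕ} (hD : D.natDegree ≤ J) (hj : J < j) (z : ℝ) :
    (hasseDeriv j D).eval z = 0 := by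
  rw [hasseDeriv_eq_zero_of_lt_natDegree D j (hD.trans_lt hj), eval_zero]

lemma exists_abs_coeff_le (J : ℕ) : ∃ K : ℝ, 0 ≤ K ∧ ∀ (q : ℝ[X]) (A : ℝ), q.natDegree ≤ J →
    (∀ i ∈ range (J + 1), |q.eval (i : ℝ)| ≤ A) → ∀ k, |q.coeff k| ≤ K * A := by
  refine ⟨∑ k ∈ range (J + 1), ∑ i ∈ range (J + 1),
    |(Lagrange.basis (range (J + 1)) (fun i : ℕ => (i : ℝ)) i).coeff k|,
    sum_nonneg fun _ _ => sum_nonneg fun _ _ => abs_nonneg _, fun q A hq h k => ?_⟩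
  have hA : 0 ≤ A := (abs_nonneg _).trans (h 0 (by simp))
  by_cases hk : k ∈ range (J + 1)
  · have hinj : Set.InjOn (fun i : ℕ => (i : ℝ)) (range (J + 1)) := fun a _ b _ hab => by
      simpa using hab
    have hdeg : q.degree < #(range (J + 1)) := by
      rw [card_range]
      exact (degree_le_of_natDegree_le hq).trans_lt (by exact_mod_cast Nat.lt_succ_self J)
    have hcoeff : q.coeff k = ∑ i ∈ range (J + 1), q.eval (i : ℝ) *
        (Lagrange.basis (range (J + 1)) (fun i : ℕ => (i : ℝ)) i).coeff k := by
      conv_lhs => rw [Lagrange.eq_interpolate hinj hdeg]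
      simp [Lagrange.interpolate_apply, finsetSum_coeff]
    rw [hcoeff]
    calc _ ≤ ∑ i ∈ range (J + 1), A *
        |(Lagrange.basis (range (J + 1)) (fun i : ℕ => (i : ℝ)) i).coeff k| := by
          refine (abs_sum_le_sum_abs _ _).trans (sum_le_sum fun i hi => ?_)
          rw [abs_mul]
          exact mul_le_mul_of_nonneg_right (h i hi) (abs_nonneg _)
      _ = (∑ i ∈ range (J + 1),
        |(Lagrange.basis (range (J + 1)) (fun i : ℕ => (i : ℝ)) i).coeff k|) * A := by
          rw [← mul_sum, mul_comm]
      _ ≤ _ := mul_le_mul_of_nonneg_right (single_le_sum (f := fun k => ∑ i ∈ range (J + 1),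
          |(Lagrange.basis (range (J + 1)) (fun i : ℕ => (i : ℝ)) i).coeff k|)
          (fun _ _ => sum_nonneg fun _ _ => abs_nonneg _) hk) hA
  · rw [coeff_eq_zero_of_natDegree_lt (by simp at hk; omega), abs_zero]
    exact mul_nonneg (sum_nonneg fun _ _ => sum_nonneg fun _ _ => abs_nonneg _) hA

/-- Bound for Taylor coefficients of a polynomial, away from an interval where it is bounded. -/
lemma exists_abs_hasseDeriv_le (J : ℕ) : ∃ K : ℝ, 0 ≤ K ∧ ∀ (D : ℝ[X]) (a l A Q z : ℝ),
    D.natDegree ≤ J → 0 < l → (∀ y ∈ Set.Icc a (a + l), |D.eval y| ≤ A) → 1 ≤ Q →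
    |z - a| ≤ Q * l → ∀ j, |(hasseDeriv j D).eval z| ≤ K * A * Q ^ (J - j) / l ^ j := by
  obtain ⟨K, hK, h⟩ := exists_abs_coeff_le J
  refine ⟨(J + 1) * 2 ^ J * K * (J + 1) ^ J, by positivity, fun D a l A Q z hD hl hA hQ hz j => ?_⟩
  have hA0 : 0 ≤ A := (abs_nonneg _).trans (hA a ⟨le_rfl, by linarith⟩)
  rcases lt_or_ge J j with hj | hj
  · rw [hasseDeriv_eval_eq_zero hD hj, abs_zero]
    positivity
  set μ : ℝ := l / (J + 1) with hμ
  have hμ0 : 0 < μ := by positivity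
  set ζ : ℝ := (z - a) / μ
  have hzζ : z = a + μ * ζ := by simp only [ζ]; field_simp; ring
  set q : ℝ[X] := D.comp (C a + C μ * X)
  have hlin : (C a + C μ * X : ℝ[X]).natDegree ≤ 1 := by compute_degree
  have hq : q.natDegree ≤ J :=
    natDegree_comp_le.trans ((Nat.mul_le_mul hD hlin).trans (by simp))
  have hqc : ∀ k, |q.coeff k| ≤ K * A := h q A hq fun i hi => by
    have hi' : (i : ℝ) ≤ J := by exact_mod_cast (by simpa [Nat.lt_succ_iff] using hi : i ≤ J)
    have : q.eval (i : ℝ) = D.eval (a + μ * i) := by simp [q]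
    rw [this]
    refine hA _ ⟨by nlinarith [Nat.cast_nonneg (α := ℝ) i], ?_⟩
    have : μ * i ≤ l := by
      rw [hμ, div_mul_eq_mul_div, div_le_iff₀ (by positivity)]
      nlinarith
    linarith
  have hrel : (hasseDeriv j q).eval ζ = μ ^ j * (hasseDeriv j D).eval z := by
    rw [← taylor_coeff, ← taylor_coeff]
    have : taylor ζ q = (taylor z D).comp (C μ * X) := by
      simp only [taylor_apply, q, comp_assoc]
      congr 1
      simp [hzζ]
      ring
    rw [this, comp_C_mul_X_coeff, mul_comm]
  have hζ : |ζ| ≤ Q * (J + 1) := by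
    simp only [ζ]
    rw [abs_div, abs_of_pos hμ0, div_le_iff₀ hμ0, hμ]
    calc _ ≤ _ := hz
      _ = _ := by field_simp
  have hQJ : 1 ≤ Q * (J + 1) := by nlinarith [Nat.cast_nonneg (α := ℝ) J]
  have hbd : |(hasseDeriv j q).eval ζ| ≤ (J + 1) * (2 ^ J * (K * A) * (Q * (J + 1)) ^ (J - j)) := by
    rw [eval_eq_sum_range' (n := J + 1)
      (by have := natDegree_hasseDeriv_le q j; omega)]
    refine (abs_sum_le_sum_abs _ _).trans ?_
    calc _ ≤ ∑ _k ∈ range (J + 1), (2 ^ J * (K * A) * (Q * (J + 1)) ^ (J - j)) := by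
          refine sum_le_sum fun k _ => ?_
          rw [hasseDeriv_coeff, abs_mul, abs_mul, abs_pow]
          rcases lt_or_ge J (k + j) with hk | hk
          · rw [coeff_eq_zero_of_natDegree_lt (by omega)]
            simp only [abs_zero, mul_zero, zero_mul]
            positivity
          · gcongr
            · rw [Nat.abs_cast]
              calc ((k + j).choose j : ℝ) ≤ 2 ^ (k + j) := by exact_mod_cast Nat.choose_le_two_pow _ _
                _ ≤ 2 ^ J := pow_le_pow_right₀ (by norm_num) hk
            · exact hqc _
            · exact (pow_le_pow_left₀ (abs_nonneg _) hζ k).trans (pow_le_pow_right₀ hQJ (by omega))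
      _ = _ := by simp
  rw [hrel, abs_mul, abs_of_pos (pow_pos hμ0 j)] at hbd
  have : |(hasseDeriv j D).eval z| ≤
      (J + 1) * (2 ^ J * (K * A) * (Q * (J + 1)) ^ (J - j)) / μ ^ j := by
    rw [le_div_iff₀ (pow_pos hμ0 j), mul_comm]
    exact hbd
  refine this.trans (le_of_eq ?_)
  have hJJ : ((J : ℝ) + 1) ^ J = (J + 1) ^ (J - j) * (J + 1) ^ j := by
    rw [← pow_add, Nat.sub_add_cancel hj]
  rw [hJJ, hμ, div_pow, mul_pow]
  field_simp

/-! ### The Whitney inequality -/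

lemma fwdDiff_iter_eq_sum (f : ℝ → ℝ) (r : ℕ) (s v : ℝ) :
    (fwdDiff s)^[r] f v =
      ∑ k ∈ range (r + 1), ((-1) ^ (r - k) * (r.choose k : ℝ)) * f (v + k * s) := by
  rw [fwdDiff_iter_eq_sum_shift]
  refine sum_congr rfl fun k _ => ?_
  simp

lemma fwdDiff_iter_comp_affine (f : ℝ → ℝ) (r : ℕ) (c s t z : ℝ) :
    (fwdDiff t)^[r] (fun y => f (c + y * s)) z = (fwdDiff (t * s))^[r] f (c + z * s) := by
  rw [fwdDiff_iter_eq_sum, fwdDiff_iter_eq_sum]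
  refine sum_congr rfl fun k _ => ?_
  ring_nf

lemma fwdDiff_iter_eval_eq_zero {P : ℝ[X]} {r : ℕ} (hP : P.natDegree < r) (s v : ℝ) :
    (fwdDiff s)^[r] (fun y => P.eval y) v = 0 := by
  have hlin : (C v + C s * X : ℝ[X]).natDegree ≤ 1 := by compute_degree
  have hQ : (P.comp (C v + C s * X)).natDegree < r :=
    (natDegree_comp_le.trans ((Nat.mul_le_mul_left _ hlin).trans (by simp))).trans_lt hP
  have h := congrFun (fwdDiff_iter_eq_zero_of_degree_lt hQ) 0
  have h2 := fwdDiff_iter_comp_affine (fun y => P.eval y) r v s 1 0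
  rw [one_mul, zero_mul, add_zero] at h2
  have hfun : (fun y => P.eval (v + y * s)) = (P.comp (C v + C s * X)).eval := by
    ext y
    simp only [eval_comp, eval_add, eval_mul, eval_C, eval_X, mul_comm]
  rw [← h2, hfun, h, Pi.zero_apply]

lemma fwdDiff_iter_sub (f g : ℝ → ℝ) (r : ℕ) (s v : ℝ) :
    (fwdDiff s)^[r] (fun y => f y - g y) v = (fwdDiff s)^[r] f v - (fwdDiff s)^[r] g v := by
  simp only [fwdDiff_iter_eq_sum, mul_sub, sum_sub_distrib]

/-- A function vanishing at `0, …, r` with small differences of order `r + 1` stays small. -/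
lemma abs_le_of_abs_fwdDiff_iter_le {r : ℕ} {N : ℕ} {W : ℝ → ℝ} {B : ℝ} (hB : 0 ≤ B)
    (h0 : ∀ i : ℕ, i ≤ r → W i = 0)
    (hd : ∀ i : ℕ, i + r + 1 ≤ N → |(fwdDiff 1)^[r + 1] W i| ≤ B) :
    ∀ i : ℕ, i ≤ N → |W i| ≤ (1 + 2 ^ (r + 1)) ^ i * B := by
  intro i
  induction i using Nat.strong_induction_on with
  | _ i ih =>
    intro hi
    rcases le_or_gt i r with hir | hir
    · rw [h0 i hir, abs_zero]; positivity
    obtain ⟨j, rfl⟩ : ∃ j, i = j + r + 1 := ⟨i - (r + 1), by omega⟩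
    have h := hd j hi
    rw [fwdDiff_iter_eq_sum, sum_range_succ] at h
    simp only [Nat.sub_self, pow_zero, Nat.choose_self, Nat.cast_one, one_mul, mul_one] at h
    set S := ∑ k ∈ range (r + 1), (-1) ^ (r + 1 - k) * ((r + 1).choose k : ℝ) * W (j + k)
    have hS : |S| ≤ 2 ^ (r + 1) * ((1 + 2 ^ (r + 1)) ^ (j + r) * B) := by
      calc |S| ≤ ∑ k ∈ range (r + 1), ((r + 1).choose k : ℝ) *
            ((1 + 2 ^ (r + 1)) ^ (j + r) * B) := by
            refine (abs_sum_le_sum_abs _ _).trans (sum_le_sum fun k hk => ?_)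
            rw [mem_range] at hk
            rw [abs_mul, abs_mul, abs_pow, abs_neg, abs_one, one_pow, one_mul, Nat.abs_cast]
            gcongr
            have := ih (j + k) (by omega) (by omega)
            push_cast at this
            refine this.trans ?_
            gcongr
            · linarith [show (0:ℝ) < 2 ^ (r + 1) by positivity]
            · omega
        _ ≤ ∑ k ∈ range (r + 1 + 1), ((r + 1).choose k : ℝ) *
            ((1 + 2 ^ (r + 1)) ^ (j + r) * B) :=
            sum_le_sum_of_subset_of_nonneg (range_subset_range.2 (by omega))
              fun _ _ _ => by positivity
        _ = _ := by
            rw [← sum_mul]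
            congr 1
            exact_mod_cast Nat.sum_range_choose (r + 1)
    have hE : (1 : ℝ) ≤ (1 + 2 ^ (r + 1)) ^ (j + r) :=
      one_le_pow₀ (by linarith [show (0:ℝ) < 2 ^ (r + 1) by positivity])
    have hW : |W ((j + r + 1 : ℕ) : ℝ)| ≤ B + |S| := by
      have : W ((j + r + 1 : ℕ) : ℝ) = (S + W (j + ((r + 1 : ℕ) : ℝ))) - S := by
        push_cast; ring_nf
      rw [this]
      exact (abs_sub _ _).trans (by gcongr)
    calc _ ≤ _ := hW
      _ ≤ (1 + 2 ^ (r + 1)) ^ (j + r) * B + 2 ^ (r + 1) * ((1 + 2 ^ (r + 1)) ^ (j + r) * B) := by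
          gcongr
          nlinarith
      _ = _ := by ring

lemma exists_abs_eval_le (J : ℕ) : ∃ K : ℝ, 0 ≤ K ∧ ∀ (q : ℝ[X]) (A : ℝ), q.natDegree ≤ J →
    (∀ i : ℕ, i ≤ J → |q.eval (i : ℝ)| ≤ A) → ∀ z ∈ Set.Icc (0 : ℝ) J, |q.eval z| ≤ K * A := by
  obtain ⟨K, hK, h⟩ := exists_abs_coeff_le J
  refine ⟨∑ k ∈ range (J + 1), K * (J : ℝ) ^ k, by positivity, fun q A hq hA z hz => ?_⟩
  have hA0 : 0 ≤ A := (abs_nonneg _).trans (hA 0 (by simp))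
  rw [eval_eq_sum_range' (n := J + 1) (by omega), sum_mul]
  refine (abs_sum_le_sum_abs _ _).trans (sum_le_sum fun k _ => ?_)
  rw [abs_mul, abs_pow, abs_of_nonneg hz.1]
  calc _ ≤ (K * A) * (J : ℝ) ^ k := by
        gcongr
        · exact pow_nonneg hz.1 _
        · exact h q A hq (fun i hi => hA i (by simpa [Nat.lt_succ_iff] using hi)) k
        · exact hz.1
        · exact hz.2
    _ = _ := by ring

/-- Differences of order `r` of `f` inside `[α, β]` are bounded by `ω`. -/
def FwdDiffBdd (r : ℕ) (f : ℝ → ℝ) (α β ω : ℝ) : Prop :=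
  ∀ v s : ℝ, v ∈ Set.Icc α β → v + r * s ∈ Set.Icc α β → |(fwdDiff s)^[r] f v| ≤ ω

lemma abs_fwdDiff_iter_integral_le {r : ℕ} {f : ℝ → ℝ} (hf : Continuous f) {α β ω : ℝ}
    (h : FwdDiffBdd r f α β ω) {c s : ℝ} (hc : c ∈ Set.Icc α β)
    (hcs : c + (r + 1) * s ∈ Set.Icc α β) :
    |(fwdDiff s)^[r + 1] (fun y => ∫ t in α..y, f t) c| ≤ ω * |s| := by
  have hfint : ∀ a b, IntervalIntegrable f MeasureTheory.volume a b :=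
    fun a b => hf.intervalIntegrable a b
  have hd : fwdDiff s (fun y => ∫ t in α..y, f t) = fun y => ∫ t in (0:ℝ)..s, f (y + t) := by
    ext y
    rw [fwdDiff, intervalIntegral.integral_interval_sub_left (hfint _ _) (hfint _ _),
      intervalIntegral.integral_comp_add_left, add_zero]
  have hkey : (fwdDiff s)^[r + 1] (fun y => ∫ t in α..y, f t) c =
      ∫ t in (0:ℝ)..s, (fwdDiff s)^[r] f (c + t) := by
    rw [Function.iterate_succ_apply, hd, fwdDiff_iter_eq_sum]
    simp only [fwdDiff_iter_eq_sum]
    rw [intervalIntegral.integral_finsetSum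
      (fun k _ => Continuous.intervalIntegrable (by fun_prop) _ _)]
    refine sum_congr rfl fun k _ => ?_
    rw [intervalIntegral.integral_const_mul]
    congr 2
    ext t
    ring_nf
  rw [hkey]
  have := intervalIntegral.norm_integral_le_of_norm_le_const (a := 0) (b := s)
    (f := fun t => (fwdDiff s)^[r] f (c + t)) (C := ω) fun t ht => by
      have ht' : t ∈ Set.uIcc 0 s := Set.uIoc_subset_uIcc ht
      have hconv : Convex ℝ (Set.Icc α β) := convex_Icc α β
      have hr : (0 : ℝ) < r + 1 := by positivity
      rw [Real.norm_eq_abs]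
      rcases le_total 0 s with hs | hs
      · rw [Set.uIcc_of_le hs] at ht'
        refine h _ _ ⟨by linarith [hc.1, ht'.1], ?_⟩ ⟨?_, ?_⟩
        · nlinarith [hcs.2, ht'.2, Nat.cast_nonneg (α := ℝ) r]
        · nlinarith [hc.1, ht'.1, Nat.cast_nonneg (α := ℝ) r]
        · linarith [hcs.2, ht'.2]
      · rw [Set.uIcc_of_ge hs] at ht'
        refine h _ _ ⟨?_, by linarith [hc.2, ht'.2]⟩ ⟨?_, ?_⟩
        · nlinarith [hcs.1, ht'.1, Nat.cast_nonneg (α := ℝ) r]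
        · linarith [hcs.1, ht'.1]
        · nlinarith [hc.2, ht'.2, Nat.cast_nonneg (α := ℝ) r]
  simpa using this

lemma add_mul_mem_Icc {α β c s R t : ℝ} (hc : c ∈ Set.Icc α β) (hcs : c + R * s ∈ Set.Icc α β)
    (ht : t ∈ Set.Icc 0 R) : c + t * s ∈ Set.Icc α β := by
  rcases le_total 0 s with hs | hs
  · exact ⟨by nlinarith [hc.1, ht.1], by nlinarith [hcs.2, ht.2]⟩
  · exact ⟨by nlinarith [hcs.1, ht.2], by nlinarith [hc.2, ht.1]⟩

/-- Equidistant interpolation of `G` at `r + 1` nodes inside `[α, β]` has error at most `K` times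
the step. -/
def InterpBdd (r : ℕ) (G : ℝ → ℝ) (α β K : ℝ) : Prop :=
  ∀ c s : ℝ, c ∈ Set.Icc α β → c + r * s ∈ Set.Icc α β → ∀ L : ℝ[X], L.natDegree ≤ r →
    (∀ i : ℕ, i ≤ r → L.eval (i : ℝ) = G (c + i * s)) →
      ∀ z ∈ Set.Icc (0 : ℝ) r, |G (c + z * s) - L.eval z| ≤ K * |s|

lemma exists_interpolant (r : ℕ) (g : ℝ → ℝ) :
    ∃ L : ℝ[X], L.natDegree ≤ r ∧ ∀ i : ℕ, i ≤ r → L.eval (i : ℝ) = g i := by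
  have hinj : Set.InjOn (fun i : ℕ => (i : ℝ)) (range (r + 1)) := fun a _ b _ hab => by
    simpa using hab
  refine ⟨Lagrange.interpolate (range (r + 1)) (fun i : ℕ => (i : ℝ)) (fun i => g i), ?_,
    fun i hi => Lagrange.eval_interpolate_at_node (fun i : ℕ => g i) hinj
      (by simpa [Nat.lt_succ_iff] using hi)⟩
  have := Lagrange.degree_interpolate_lt (fun i : ℕ => g i) hinj
  rw [card_range] at this
  exact natDegree_le_of_degree_le (Order.le_of_lt_succ (by exact_mod_cast this))

lemma InterpBdd.halve (r : ℕ) : ∃ K' : ℝ, 0 ≤ K' ∧ ∀ (f : ℝ → ℝ) (α β ω K : ℝ), Continuous f →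
    0 ≤ ω → FwdDiffBdd r f α β ω → InterpBdd r (fun y => ∫ t in α..y, f t) α β K →
      InterpBdd r (fun y => ∫ t in α..y, f t) α β (K / 2 + K' * ω) := by
  obtain ⟨K₁, hK₁, hev⟩ := exists_abs_eval_le r
  refine ⟨K₁ * ((1 + 2 ^ (r + 1)) ^ (2 * r) / 2), by positivity,
    fun f α β ω K hf hω h hK => ?_⟩
  set G : ℝ → ℝ := fun y => ∫ t in α..y, f t with hG
  have hhalf : ∀ c s : ℝ, c ∈ Set.Icc α β → c + r * s ∈ Set.Icc α β → ∀ L : ℝ[X],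
      L.natDegree ≤ r → (∀ i : ℕ, i ≤ r → L.eval (i : ℝ) = G (c + i * s)) →
      ∀ z ∈ Set.Icc (0 : ℝ) (r / 2), |G (c + z * s) - L.eval z| ≤
        (K / 2 + K₁ * ((1 + 2 ^ (r + 1)) ^ (2 * r) / 2) * ω) * |s| := by
    intro c s hc hcs L hL hLG z hz
    obtain ⟨L', hL', hLG'⟩ := exists_interpolant r (fun i => G (c + i * (s / 2)))
    have hmem : ∀ t ∈ Set.Icc (0 : ℝ) (2 * r), c + t * (s / 2) ∈ Set.Icc α β := fun t ht =>
      add_mul_mem_Icc hc (by convert hcs using 1; ring) ht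
    have habs : |s / 2| = |s| / 2 := by rw [abs_div, abs_two]
    have hW := abs_le_of_abs_fwdDiff_iter_le (r := r) (N := 2 * r)
      (W := fun z => G (c + z * (s / 2)) - L'.eval z) (B := ω * |s / 2|) (by positivity)
      (fun i hi => by simp [hLG' i hi]) fun i hi => by
        have hi' : (i : ℝ) + r + 1 ≤ 2 * r := by exact_mod_cast hi
        rw [fwdDiff_iter_sub, fwdDiff_iter_comp_affine, fwdDiff_iter_eval_eq_zero (by omega),
          sub_zero, one_mul]
        refine abs_fwdDiff_iter_integral_le hf h (hmem _ ⟨by positivity, by linarith⟩) ?_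
        have := hmem (i + r + 1) ⟨by positivity, hi'⟩
        convert this using 1
        ring
    set D : ℝ[X] := L'.comp (C 2 * X) - L
    have hlin : (C 2 * X : ℝ[X]).natDegree ≤ 1 := by compute_degree
    have hD : D.natDegree ≤ r := (natDegree_sub_le _ _).trans (max_le
      (natDegree_comp_le.trans ((Nat.mul_le_mul hL' hlin).trans (by simp))) hL)
    have hDe : ∀ z, D.eval z = L'.eval (2 * z) - L.eval z := by simp [D]
    have hDz : |D.eval z| ≤ K₁ * ((1 + 2 ^ (r + 1)) ^ (2 * r) * (ω * |s / 2|)) := by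
      refine hev D _ hD (fun i hi => ?_) z ⟨hz.1, by
        linarith [hz.2, Nat.cast_nonneg (α := ℝ) r]⟩
      have h2 := hW (2 * i) (by omega)
      rw [hDe, hLG i hi, abs_sub_comm]
      have h3 : c + ((2 * i : ℕ) : ℝ) * (s / 2) = c + i * s := by push_cast; ring
      simp only [h3] at h2
      push_cast at h2
      refine h2.trans ?_
      gcongr
      linarith [show (0:ℝ) < 2 ^ (r + 1) by positivity]
    have hmain := hK c (s / 2) hc (hmem r ⟨by positivity, by
      linarith [Nat.cast_nonneg (α := ℝ) r]⟩) L' hL' hLG' (2 * z) ⟨by linarith [hz.1], by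
        linarith [hz.2]⟩
    have h4 : c + 2 * z * (s / 2) = c + z * s := by ring
    rw [h4] at hmain
    have : G (c + z * s) - L.eval z = (G (c + z * s) - L'.eval (2 * z)) + D.eval z := by
      rw [hDe]; ring
    rw [this]
    refine (abs_add_le _ _).trans ((add_le_add hmain hDz).trans (le_of_eq ?_))
    rw [habs]
    ring
  intro c s hc hcs L hL hLG z hz
  rcases le_total z (r / 2) with hz2 | hz2
  · exact hhalf c s hc hcs L hL hLG z ⟨hz.1, hz2⟩
  have hlin : (C (r : ℝ) - X : ℝ[X]).natDegree ≤ 1 := by compute_degree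
  have := hhalf (c + r * s) (-s) hcs (by convert hc using 1; ring) (L.comp (C (r : ℝ) - X))
    (natDegree_comp_le.trans ((Nat.mul_le_mul hL hlin).trans (by simp)))
    (fun i hi => by
      have := hLG (r - i) (by omega)
      rw [Nat.cast_sub hi] at this
      simp only [eval_comp, eval_sub, eval_C, eval_X, this]
      congr 1
      ring) (r - z) ⟨by linarith [hz.2], by linarith⟩
  simp only [eval_comp, eval_sub, eval_C, eval_X, abs_neg, sub_sub_cancel] at this
  convert this using 4
  ring

lemma InterpBdd.exists_of_continuous (r : ℕ) {f : ℝ → ℝ} (hf : Continuous f) (α β : ℝ) :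
    ∃ K, 0 ≤ K ∧ InterpBdd r (fun y => ∫ t in α..y, f t) α β K := by
  obtain ⟨K₁, hK₁, hev⟩ := exists_abs_eval_le r
  obtain ⟨F, hF⟩ := (isCompact_Icc (a := α) (b := β)).exists_bound_of_continuousOn hf.continuousOn
  have hfint : ∀ a b, IntervalIntegrable f MeasureTheory.volume a b :=
    fun a b => hf.intervalIntegrable a b
  have hlip : ∀ c s : ℝ, c ∈ Set.Icc α β → c + r * s ∈ Set.Icc α β → ∀ t ∈ Set.Icc (0:ℝ) r,
      |(∫ t in α..(c + t * s), f t) - ∫ t in α..c, f t| ≤ |F| * r * |s| := by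
    intro c s hc hcs t ht
    rw [intervalIntegral.integral_interval_sub_left (hfint _ _) (hfint _ _), ← Real.norm_eq_abs]
    refine (intervalIntegral.norm_integral_le_of_norm_le_const (C := |F|) fun y hy => ?_).trans ?_
    · exact (hF y ((convex_Icc α β).ordConnected.uIcc_subset hc (add_mul_mem_Icc hc hcs ht)
        (Set.uIoc_subset_uIcc hy))).trans (le_abs_self _)
    · rw [add_sub_cancel_left, abs_mul, abs_of_nonneg ht.1, mul_assoc]
      gcongr
      exact ht.2
  refine ⟨|F| * r + K₁ * (|F| * r), by positivity, fun c s hc hcs L hL hLG z hz => ?_⟩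
  have h1 := hlip c s hc hcs z hz
  have h2 := hev (L - C (∫ t in α..c, f t)) (|F| * r * |s|)
    ((natDegree_sub_C).le.trans hL) (fun i hi => by
      rw [eval_sub, eval_C, hLG i hi]
      exact hlip c s hc hcs i ⟨by positivity, by exact_mod_cast hi⟩) z hz
  rw [eval_sub, eval_C] at h2
  calc _ ≤ |((∫ t in α..(c + z * s), f t) - ∫ t in α..c, f t)| +
      |L.eval z - ∫ t in α..c, f t| := by
        refine le_trans (le_of_eq ?_) (abs_sub _ _)
        congr 1
        ring
    _ ≤ _ := by linarith

lemma exists_interpBdd (r : ℕ) : ∃ K : ℝ, 0 ≤ K ∧ ∀ (f : ℝ → ℝ) (α β ω : ℝ), Continuous f →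
    0 ≤ ω → FwdDiffBdd r f α β ω → InterpBdd r (fun y => ∫ t in α..y, f t) α β (K * ω) := by
  obtain ⟨K', hK', hstep⟩ := InterpBdd.halve r
  refine ⟨2 * K', by positivity, fun f α β ω hf hω h => ?_⟩
  obtain ⟨K₀, hK₀, hbase⟩ := InterpBdd.exists_of_continuous r hf α β
  have hiter : ∀ n : ℕ, InterpBdd r (fun y => ∫ t in α..y, f t) α β
      (K₀ * (1 / 2) ^ n + 2 * K' * ω) := by
    intro n
    induction n with
    | zero =>
      intro c s hc hcs L hL hLG z hz
      refine (hbase c s hc hcs L hL hLG z hz).trans ?_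
      gcongr
      simp only [pow_zero, mul_one]
      linarith [mul_nonneg hK' hω]
    | succ n ih =>
      convert hstep f α β ω _ hf hω h ih using 1
      ring
  intro c s hc hcs L hL hLG z hz
  have hlim : Filter.Tendsto (fun n : ℕ => (K₀ * (1 / 2) ^ n + 2 * K' * ω) * |s|) Filter.atTop
      (nhds ((K₀ * 0 + 2 * K' * ω) * |s|)) :=
    (((tendsto_pow_atTop_nhds_zero_of_lt_one (by norm_num) (by norm_num)).const_mul _).add_const
      _).mul_const _
  rw [mul_zero, zero_add] at hlim
  exact ge_of_tendsto' hlim fun n => hiter n c s hc hcs L hL hLG z hz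

/-- **The Whitney inequality**. -/
lemma exists_polynomial_of_fwdDiffBdd {r : ℕ} (hr : 1 ≤ r) : ∃ K : ℝ, 0 ≤ K ∧
    ∀ (f : ℝ → ℝ) (α β ω : ℝ), Continuous f → 0 ≤ ω → α < β → FwdDiffBdd r f α β ω →
      ∃ P : ℝ[X], P.natDegree ≤ r - 1 ∧ ∀ y ∈ Set.Icc α β, |f y - P.eval y| ≤ K * ω := by
  obtain ⟨K, hK, hfint⟩ := exists_interpBdd r
  refine ⟨1 + ∑ k ∈ range r, (r.choose (k + 1) : ℝ) * (4 * K), by positivity,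
    fun f α β ω hf hω hαβ h => ?_⟩
  have hr0 : (0 : ℝ) < r := by exact_mod_cast hr
  set G : ℝ → ℝ := fun y => ∫ t in α..y, f t with hG
  set s : ℝ := (β - α) / r with hs
  have hs0 : 0 < s := div_pos (by linarith) hr0
  have hrs : r * s = β - α := by rw [hs]; field_simp
  obtain ⟨L, hL, hLG⟩ := exists_interpolant r (fun i => G (α + i * s))
  set P₀ : ℝ[X] := L.comp (C s⁻¹ * (X - C α)) with hP₀
  have hlin : (C s⁻¹ * (X - C α) : ℝ[X]).natDegree ≤ 1 := by compute_degree
  have hP₀d : P₀.natDegree ≤ r :=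
    natDegree_comp_le.trans ((Nat.mul_le_mul hL hlin).trans (by simp))
  have hΓ : ∀ y ∈ Set.Icc α β, |G y - P₀.eval y| ≤ K * ω * s := by
    intro y hy
    have := hfint f α β ω hf hω h α s ⟨le_rfl, hαβ.le⟩ ⟨by nlinarith, by linarith⟩ L hL hLG
      (s⁻¹ * (y - α)) ⟨mul_nonneg (inv_nonneg.2 hs0.le) (by linarith [hy.1]), by
        rw [inv_mul_le_iff₀ hs0]; linarith [hy.2]⟩
    rw [abs_of_pos hs0] at this
    convert this using 3
    · congr 1; field_simp; ring
    · simp [hP₀]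
  set P : ℝ[X] := derivative P₀
  have hPd : P.natDegree ≤ r - 1 := (natDegree_derivative_le _).trans (by omega)
  refine ⟨P, hPd, fun x hx => ?_⟩
  have hder : ∀ y, HasDerivAt (fun y => G y - P₀.eval y) (f y - P.eval y) y := fun y =>
    ((hf.integral_hasStrictDerivAt α y).hasDerivAt).sub (P₀.hasDerivAt y)
  have hgc : Continuous fun y => f y - P.eval y := hf.sub P.continuous
  obtain ⟨τ, hτ, hτm⟩ : ∃ τ : ℝ, |τ| = s / 2 ∧ x + r * τ ∈ Set.Icc α β := by
    rcases le_total x ((α + β) / 2) with hxm | hxm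
    · exact ⟨s / 2, abs_of_pos (by linarith), by nlinarith [hx.1], by linarith⟩
    · refine ⟨-(s / 2), by rw [abs_neg]; exact abs_of_pos (by linarith), by linarith, ?_⟩
      nlinarith [hx.2]
  have hτ0 : τ ≠ 0 := by rw [← abs_pos, hτ]; linarith
  have hI : ∀ k : ℕ, k < r → |∫ t in (0:ℝ)..1, (f (x + (k + 1) * τ * t) -
      P.eval (x + (k + 1) * τ * t))| ≤ 4 * K * ω := by
    intro k hk
    have hk' : (k : ℝ) + 1 ≤ r := by exact_mod_cast hk
    have hkτ : ((k : ℝ) + 1) * τ ≠ 0 := mul_ne_zero (by positivity) hτ0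
    have h1 := intervalIntegral.mul_integral_comp_add_mul (a := (0 : ℝ)) (b := 1)
      (f := fun y => f y - P.eval y) (c := (k + 1) * τ) (d := x)
    rw [intervalIntegral.integral_eq_sub_of_hasDerivAt (fun y _ => hder y)
      (hgc.intervalIntegrable _ _), mul_zero, add_zero, mul_one] at h1
    have hm := hΓ _ (add_mul_mem_Icc hx hτm (t := k + 1) ⟨by positivity, hk'⟩)
    have hx' := hΓ x hx
    have h2 : |((k : ℝ) + 1) * τ| * |∫ t in (0:ℝ)..1, (f (x + (k + 1) * τ * t) -
      P.eval (x + (k + 1) * τ * t))| ≤ 2 * (K * ω * s) := by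
      rw [← abs_mul, h1]
      exact (abs_sub _ _).trans (by linarith)
    rw [abs_mul, hτ, abs_of_nonneg (by positivity : (0:ℝ) ≤ k + 1)] at h2
    have h3 : s / 2 * |∫ t in (0:ℝ)..1, (f (x + (k + 1) * τ * t) -
      P.eval (x + (k + 1) * τ * t))| ≤ 2 * (K * ω * s) := by
      refine le_trans ?_ h2
      gcongr
      nlinarith [Nat.cast_nonneg (α := ℝ) k]
    nlinarith
  have hid : (∫ t in (0:ℝ)..1, (fwdDiff (τ * t))^[r] f x) = (-1) ^ r * (f x - P.eval x) +
      ∑ k ∈ range r, ((-1) ^ (r - (k + 1)) * (r.choose (k + 1) : ℝ)) *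
        ∫ t in (0:ℝ)..1, (f (x + (k + 1) * τ * t) - P.eval (x + (k + 1) * τ * t)) := by
    have : ∀ t, (fwdDiff (τ * t))^[r] f x =
        (fwdDiff (τ * t))^[r] (fun y => f y - P.eval y) x := fun t => by
      rw [fwdDiff_iter_sub, fwdDiff_iter_eval_eq_zero (by omega), sub_zero]
    simp only [this, fwdDiff_iter_eq_sum]
    rw [intervalIntegral.integral_finsetSum
      (fun k _ => Continuous.intervalIntegrable (by fun_prop) _ _), sum_range_succ', add_comm]
    congr 1
    · simp
    · refine sum_congr rfl fun k _ => ?_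
      rw [intervalIntegral.integral_const_mul]
      push_cast
      simp only [mul_assoc]
  have hω' : |∫ t in (0:ℝ)..1, (fwdDiff (τ * t))^[r] f x| ≤ ω := by
    have := intervalIntegral.norm_integral_le_of_norm_le_const (a := 0) (b := 1)
      (f := fun t => (fwdDiff (τ * t))^[r] f x) (C := ω) fun t ht => by
        rw [Set.uIoc_of_le zero_le_one] at ht
        refine h x _ hx ?_
        have := add_mul_mem_Icc hx hτm (t := r * t) ⟨by nlinarith [ht.1], by nlinarith [ht.2]⟩
        convert this using 1
        ring
    simpa using this
  have hfin : (-1 : ℝ) ^ r * (f x - P.eval x) = (∫ t in (0:ℝ)..1, (fwdDiff (τ * t))^[r] f x) -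
      ∑ k ∈ range r, ((-1) ^ (r - (k + 1)) * (r.choose (k + 1) : ℝ)) *
        ∫ t in (0:ℝ)..1, (f (x + (k + 1) * τ * t) - P.eval (x + (k + 1) * τ * t)) := by
    rw [hid]; ring
  have habs : |f x - P.eval x| = |(-1 : ℝ) ^ r * (f x - P.eval x)| := by
    rw [abs_mul, abs_pow, abs_neg, abs_one, one_pow, one_mul]
  rw [habs, hfin, add_mul, one_mul, sum_mul]
  refine (abs_sub _ _).trans (add_le_add hω' ((abs_sum_le_sum_abs _ _).trans
    (sum_le_sum fun k hk => ?_)))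
  rw [abs_mul, abs_mul, abs_pow, abs_neg, abs_one, one_pow, one_mul, Nat.abs_cast]
  calc _ ≤ (r.choose (k + 1) : ℝ) * (4 * K * ω) := by
        gcongr
        exact hI k (mem_range.1 hk)
    _ = _ := by ring

/-! ### Piecewise polynomial approximation on a quadratic grid -/

/-- The grid points `(i / (100 M))²`. -/
noncomputable def gridPt (M : ℕ) (i : ℕ) : ℝ := (i / (100 * M)) ^ 2

lemma gridPt_eq (M i : ℕ) : gridPt M i = (i : ℝ) ^ 2 / (100 * M) ^ 2 := div_pow _ _ _

lemma gridPt_mono (M : ℕ) {i j : ℕ} (h : i ≤ j) : gridPt M i ≤ gridPt M j := by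
  unfold gridPt
  gcongr

lemma gridPt_mem_Icc {M i : ℕ} (hM : 1 ≤ M) (hi : i ≤ 100 * M) :
    gridPt M i ∈ Set.Icc (0 : ℝ) 1 := by
  have : (0 : ℝ) < 100 * M := by exact_mod_cast (by omega : 0 < 100 * M)
  refine ⟨sq_nonneg _, ?_⟩
  rw [gridPt, sq_le_one_iff₀ (by positivity), div_le_one this]
  exact_mod_cast hi

/-- Polynomials `P i` of degree less than `2 m` approximating `f` up to `W` on consecutive cells
of a quadratic grid whose size is comparable with `√n`. -/
structure GridApprox (m n M : ℕ) (f : ℝ → ℝ) (P : ℕ → ℝ[X]) (F W : ℝ) : Prop where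
  one_le_m : 1 ≤ m
  one_le_n : 1 ≤ n
  one_le_M : 1 ≤ M
  le_sq : n ≤ M ^ 2
  sq_le : M ^ 2 ≤ 4 * n
  natDegree_le : ∀ i, (P i).natDegree ≤ 2 * m - 1
  abs_sub_le : ∀ i ≤ 87 * M, ∀ y ∈ Set.Icc (gridPt M i) (gridPt M (i + 2)),
    |f y - (P i).eval y| ≤ W
  abs_le : ∀ y ∈ Set.Icc (0 : ℝ) 1, |f y| ≤ F

lemma sub_eq_sum_Ico_sub {R : Type*} [CommRing R] (T : ℕ → R) {a b : ℕ} (h : a ≤ b) :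
    T b - T a = ∑ i ∈ Ico a b, (T (i + 1) - T i) := by
  rw [sum_Ico_eq_sub _ h, sum_range_sub, sum_range_sub]
  ring

namespace GridApprox

variable {m n M : ℕ} {f : ℝ → ℝ} {P : ℕ → ℝ[X]} {F W : ℝ}

lemma M_pos (H : GridApprox m n M f P F W) : (0 : ℝ) < M := by exact_mod_cast H.one_le_M

lemma n_pos (H : GridApprox m n M f P F W) : (0 : ℝ) < n := by exact_mod_cast H.one_le_n

lemma F_nonneg (H : GridApprox m n M f P F W) : 0 ≤ F :=
  (abs_nonneg _).trans (H.abs_le 0 (by simp))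

lemma W_nonneg (H : GridApprox m n M f P F W) : 0 ≤ W :=
  (abs_nonneg _).trans (H.abs_sub_le 0 (by simp) _ ⟨le_rfl, gridPt_mono M (by simp)⟩)

lemma gridPt_le_one (H : GridApprox m n M f P F W) {i : ℕ} (hi : i ≤ 100 * M) :
    gridPt M i ≤ 1 :=
  (gridPt_mem_Icc H.one_le_M hi).2

lemma gridPt_sub (H : GridApprox m n M f P F W) (i : ℕ) :
    gridPt M (i + 1) + (2 * i + 3) / (100 * M) ^ 2 = gridPt M (i + 2) := by
  have := H.M_pos
  rw [gridPt_eq, gridPt_eq]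
  push_cast
  field_simp
  ring

/-- Taylor coefficients of the difference of two consecutive polynomials. -/
lemma exists_abs_hasseDeriv_sub_le (m : ℕ) : ∃ K : ℝ, 0 ≤ K ∧
    ∀ {n M : ℕ} {f : ℝ → ℝ} {P : ℕ → ℝ[X]} {F W : ℝ}, GridApprox m n M f P F W →
      ∀ (i : ℕ) (Q z : ℝ), i + 1 ≤ 87 * M → 1 ≤ Q →
        |z - gridPt M (i + 1)| ≤ Q * ((2 * i + 3) / (100 * M) ^ 2) → ∀ j,
          |(hasseDeriv j (P (i + 1))).eval z - (hasseDeriv j (P i)).eval z| ≤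
            K * W * Q ^ (2 * m - 1 - j) / ((2 * i + 3) / (100 * M) ^ 2) ^ j := by
  obtain ⟨K, hK, h⟩ := exists_abs_hasseDeriv_le (2 * m - 1)
  refine ⟨K * 2, by positivity, fun {n M f P F W} H i Q z hi hQ hz j => ?_⟩
  have hM := H.M_pos
  have := h (P (i + 1) - P i) (gridPt M (i + 1)) ((2 * i + 3) / (100 * M) ^ 2) (2 * W) Q z
    ((natDegree_sub_le _ _).trans (max_le (H.natDegree_le _) (H.natDegree_le _)))
    (by positivity) (fun y hy => by
      rw [H.gridPt_sub] at hy
      have h1 := H.abs_sub_le i (by omega) y ⟨(gridPt_mono M (by omega)).trans hy.1, hy.2⟩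
      have h2 := H.abs_sub_le (i + 1) hi y ⟨hy.1, hy.2.trans (gridPt_mono M (by omega))⟩
      rw [eval_sub]
      calc _ = |(f y - (P i).eval y) - (f y - (P (i + 1)).eval y)| := by congr 1; ring
        _ ≤ _ := (abs_sub _ _).trans (by linarith)) hQ hz j
  rw [map_sub, eval_sub] at this
  refine this.trans (le_of_eq ?_)
  ring

lemma exists_abs_sub_le_pow (m : ℕ) : ∃ K : ℝ, 0 ≤ K ∧
    ∀ {n M : ℕ} {f : ℝ → ℝ} {P : ℕ → ℝ[X]} {F W : ℝ}, GridApprox m n M f P F W →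
      ∀ a b : ℕ, a ≤ 87 * M → b ≤ 87 * M → ∀ y ∈ Set.Icc (gridPt M b) (gridPt M (b + 1)),
        |f y - (P a).eval y| ≤ K * W * (|(b : ℝ) - a| + 1) ^ (4 * m) := by
  obtain ⟨K, hK, h⟩ := exists_abs_hasseDeriv_sub_le m
  refine ⟨1 + K, by positivity, fun {n M f P F W} H a b ha hb y hy => ?_⟩
  have hM := H.M_pos
  have hW := H.W_nonneg
  set k : ℝ := |(b : ℝ) - a|
  have hk : 0 ≤ k := abs_nonneg _
  have hQ : 1 ≤ (k + 1) ^ 2 := one_le_pow₀ (by linarith)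
  have hb0 := H.abs_sub_le b hb y ⟨hy.1, hy.2.trans (gridPt_mono M (by omega))⟩
  have hstep : ∀ i : ℕ, i + 1 ≤ 87 * M →
      |y - gridPt M (i + 1)| ≤ (k + 1) ^ 2 * ((2 * i + 3) / (100 * M) ^ 2) →
      |(P (i + 1)).eval y - (P i).eval y| ≤ K * W * ((k + 1) ^ 2) ^ (2 * m - 1) := by
    intro i hi hz
    simpa using h H i _ y hi hQ hz 0
  have hsum : |(P b).eval y - (P a).eval y| ≤ k * (K * W * ((k + 1) ^ 2) ^ (2 * m - 1)) := by
    rcases le_total a b with hab | hab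
    · have hkk : k = ((b - a : ℕ) : ℝ) := by
        rw [Nat.cast_sub hab]
        exact abs_of_nonneg (sub_nonneg.2 (by exact_mod_cast hab))
      rw [sub_eq_sum_Ico_sub (fun i => (P i).eval y) hab]
      refine (abs_sum_le_sum_abs _ _).trans ((sum_le_card_nsmul _ _ _ fun i hi => ?_).trans_eq
        (by rw [Nat.card_Ico, nsmul_eq_mul, ← hkk]))
      rw [mem_Ico] at hi
      refine hstep i (by omega) ?_
      have h1 : gridPt M (i + 1) ≤ y := (gridPt_mono M (by omega)).trans hy.1
      rw [abs_of_nonneg (by linarith)]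
      have h2 := hy.2
      rw [gridPt_eq] at h2 ⊢
      rw [mul_div_assoc']
      refine (sub_le_sub_right h2 _).trans ?_
      rw [← sub_div]
      gcongr
      obtain ⟨e, rfl⟩ := Nat.exists_eq_add_of_lt hi.2
      have hke : (e : ℝ) + 1 ≤ k := by
        rw [hkk]
        exact_mod_cast (by omega : e + 1 ≤ i + e + 1 - a)
      push_cast
      nlinarith [Nat.cast_nonneg (α := ℝ) e, Nat.cast_nonneg (α := ℝ) i,
        mul_nonneg hk (Nat.cast_nonneg (α := ℝ) i),
        mul_nonneg (Nat.cast_nonneg (α := ℝ) e) (Nat.cast_nonneg (α := ℝ) i),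
        mul_le_mul hke hke (by positivity) hk,
        mul_nonneg (mul_nonneg hk hk) (Nat.cast_nonneg (α := ℝ) i),
        mul_le_mul_of_nonneg_right hke (Nat.cast_nonneg (α := ℝ) i)]
    · have hkk : k = ((a - b : ℕ) : ℝ) := by
        rw [Nat.cast_sub hab]
        simp only [k]
        rw [abs_sub_comm]
        exact abs_of_nonneg (sub_nonneg.2 (by exact_mod_cast hab))
      rw [abs_sub_comm, sub_eq_sum_Ico_sub (fun i => (P i).eval y) hab]
      refine (abs_sum_le_sum_abs _ _).trans ((sum_le_card_nsmul _ _ _ fun i hi => ?_).trans_eq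
        (by rw [Nat.card_Ico, nsmul_eq_mul, ← hkk]))
      rw [mem_Ico] at hi
      refine hstep i (by omega) ?_
      have h1 : y ≤ gridPt M (i + 1) := hy.2.trans (gridPt_mono M (by omega))
      rw [abs_of_nonpos (by linarith), neg_sub]
      have h2 := hy.1
      rw [gridPt_eq] at h2 ⊢
      rw [mul_div_assoc']
      refine (sub_le_sub_left h2 _).trans ?_
      rw [← sub_div]
      gcongr
      obtain ⟨e, rfl⟩ := Nat.exists_eq_add_of_le hi.1
      have hke : (e : ℝ) + 1 ≤ k := by
        rw [hkk]
        exact_mod_cast (by omega : e + 1 ≤ a - b)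
      push_cast
      have hQk : k ≤ (k + 1) ^ 2 := by nlinarith
      nlinarith [Nat.cast_nonneg (α := ℝ) e, Nat.cast_nonneg (α := ℝ) b,
        mul_le_mul_of_nonneg_right (hke.trans hQk) (by positivity : (0:ℝ) ≤ 2 * (b + e) + 3)]
  have hpow : k * ((k + 1) ^ 2) ^ (2 * m - 1) ≤ (k + 1) ^ (4 * m) := by
    have hm := H.one_le_m
    calc _ ≤ (k + 1) * ((k + 1) ^ 2) ^ (2 * m - 1) := by gcongr; linarith
      _ = (k + 1) ^ (1 + 2 * (2 * m - 1)) := by rw [pow_add, pow_one, pow_mul]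
      _ ≤ _ := pow_le_pow_right₀ (by linarith) (by omega)
  have h1 : (1 : ℝ) ≤ (k + 1) ^ (4 * m) := one_le_pow₀ (by linarith)
  calc |f y - (P a).eval y| = |(f y - (P b).eval y) + ((P b).eval y - (P a).eval y)| := by
        congr 1; ring
    _ ≤ W + k * (K * W * ((k + 1) ^ 2) ^ (2 * m - 1)) :=
        (abs_add_le _ _).trans (add_le_add hb0 hsum)
    _ = W * 1 + K * W * (k * ((k + 1) ^ 2) ^ (2 * m - 1)) := by ring
    _ ≤ W * (k + 1) ^ (4 * m) + K * W * (k + 1) ^ (4 * m) := by gcongr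
    _ = _ := by ring

/-- The grid index of a point. -/
lemma exists_gridPt_le (H : GridApprox m n M f P F W) {y : ℝ} (hy : 0 ≤ y) :
    ∃ b : ℕ, y ∈ Set.Icc (gridPt M b) (gridPt M (b + 1)) ∧
      (b : ℝ) ≤ 100 * M * √y ∧ 100 * M * √y < b + 1 := by
  have hM := H.M_pos
  refine ⟨⌊100 * M * √y⌋₊, ?_, Nat.floor_le (by positivity), Nat.lt_floor_add_one _⟩
  have h1 := Nat.floor_le (by positivity : 0 ≤ 100 * M * √y)
  have h2 := (Nat.lt_floor_add_one (100 * M * √y)).le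
  set b := ⌊100 * M * √y⌋₊
  constructor
  · rw [gridPt]
    calc _ ≤ √y ^ 2 := by
          gcongr
          rw [div_le_iff₀ (by positivity)]
          linarith
      _ = y := Real.sq_sqrt hy
  · rw [gridPt]
    calc y = √y ^ 2 := (Real.sq_sqrt hy).symm
      _ ≤ _ := by
          gcongr
          rw [le_div_iff₀ (by positivity)]
          push_cast
          linarith

lemma index_le (H : GridApprox m n M f P F W) {b : ℕ} {y : ℝ} {R : ℕ} (hy : 0 ≤ y)
    (hb : (b : ℝ) ≤ 100 * M * √y) (hR : 10000 * y ≤ (R : ℝ) ^ 2) : b ≤ R * M := by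
  have hM := H.M_pos
  have : 100 * √y ≤ R := by
    refine le_of_sq_le_sq ?_ (by positivity)
    rw [mul_pow, Real.sq_sqrt hy]
    linarith
  exact_mod_cast (by nlinarith : (b : ℝ) ≤ R * M)

end GridApprox

lemma sum_Ico_sq_div_cube_le (a b : ℕ) (h : a ≤ b) :
    ∑ l ∈ Ico a b, ((a : ℝ) + 1) ^ 2 / ((l : ℝ) + 1) ^ 3 ≤ 2 := by
  suffices ∑ l ∈ Ico a b, ((a : ℝ) + 1) ^ 2 / ((l : ℝ) + 1) ^ 3 ≤
      2 - 2 * ((a : ℝ) + 1) / ((b : ℝ) + 1) from this.trans (sub_le_self _ (by positivity))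
  induction b, h using Nat.le_induction with
  | base => simp; field_simp; norm_num
  | succ b hb ih =>
    rw [sum_Ico_succ_top hb]
    have hb' : (a : ℝ) + 1 ≤ b + 1 := by exact_mod_cast Nat.succ_le_succ hb
    have key : ((a : ℝ) + 1) ^ 2 / ((b : ℝ) + 1) ^ 3 ≤
        2 * (a + 1) / (b + 1) - 2 * (a + 1) / ((b + 1 : ℕ) + 1) := by
      push_cast
      rw [div_sub_div _ _ (by positivity) (by positivity),
        div_le_div_iff₀ (by positivity) (by positivity)]
      have h1 : ((a : ℝ) + 1) ^ 2 * ((b + 1) * (b + 1 + 1)) ≤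
          (a + 1) * (b + 1) * ((b + 1) * (b + 1 + 1)) := by
        rw [sq]; gcongr
      refine h1.trans ?_
      have : 0 ≤ ((a : ℝ) + 1) * (b + 1) ^ 2 * b := by positivity
      nlinarith
    linarith

lemma sq_mul_pow_le {m j : ℕ} {α l N : ℝ} (hj : j ≤ 2 * m - 1) (hm : 1 ≤ m) (hα : 0 ≤ α)
    (hαl : α ≤ l) (hlN : l ≤ N) :
    (α ^ 2) ^ max (j - m) 1 * l ^ (2 * m - 1 - j) * (N ^ 2) ^ j * l ^ 3 ≤
      α ^ 2 * l ^ j * (N ^ 2) ^ m * (N ^ 2) ^ max (j - m) 1 := by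
  have hl := hα.trans hαl
  have hN := hl.trans hlN
  simp only [← pow_mul]
  rcases lt_or_ge m j with h | h
  · obtain ⟨e, rfl⟩ := Nat.exists_eq_add_of_lt h
    have h1 : max (m + e + 1 - m) 1 = e + 1 := by omega
    obtain ⟨g, hg⟩ : ∃ g, m = e + g + 2 := ⟨m - e - 2, by omega⟩
    have h2 : 2 * m - 1 - (m + e + 1) = g := by omega
    rw [h1, h2]
    calc _ = α ^ 2 * α ^ (2 * e) * l ^ g * l ^ 3 * N ^ (2 * (m + e + 1)) := by ring
      _ ≤ α ^ 2 * l ^ (2 * e) * l ^ g * l ^ 3 * N ^ (2 * (m + e + 1)) := by gcongr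
      _ = _ := by rw [hg]; ring
  · obtain ⟨e, rfl⟩ := Nat.exists_eq_add_of_le h
    have h1 : max (j - (j + e)) 1 = 1 := by omega
    obtain ⟨g, hg⟩ : ∃ g, j + 2 * e = g + 1 := ⟨j + 2 * e - 1, by omega⟩
    have h2 : 2 * (j + e) - 1 - j = g := by omega
    rw [h1, h2]
    calc _ = α ^ 2 * l ^ (g + 1) * l ^ 2 * N ^ (2 * j) := by ring
      _ = α ^ 2 * l ^ j * N ^ (2 * j) * l ^ (2 * e + 2) := by rw [← hg]; ring
      _ ≤ α ^ 2 * l ^ j * N ^ (2 * j) * N ^ (2 * e + 2) := by gcongr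
      _ = _ := by ring

namespace GridApprox

/-- In the bulk the polynomial `P (75 M)` stays controlled. -/
lemma exists_abs_eval_bulk_le (m : ℕ) : ∃ K : ℝ, 0 ≤ K ∧
    ∀ {n M : ℕ} {f : ℝ → ℝ} {P : ℕ → ℝ[X]} {F W : ℝ}, GridApprox m n M f P F W →
      ∀ y ∈ Set.Icc (9 / 16 : ℝ) (18 / 25), |(P (75 * M)).eval y| ≤ F + K * W * n ^ m := by
  obtain ⟨K, hK, h⟩ := exists_abs_hasseDeriv_sub_le m
  refine ⟨1 + K * 40000 ^ m, by positivity, fun {n M f P F W} H y hy => ?_⟩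
  have hM := H.M_pos
  have hn := H.n_pos
  have hW := H.W_nonneg
  have hm := H.one_le_m
  have hy0 : 0 ≤ y := by linarith [hy.1]
  obtain ⟨b, hyb, hb1, hb2⟩ := H.exists_gridPt_le hy0
  have hb85 : b ≤ 85 * M := H.index_le hy0 hb1 (by norm_num; linarith [hy.2])
  have h75 : 75 * M ≤ b := by
    have h1 : (3 / 4 : ℝ) ≤ √y := Real.le_sqrt_of_sq_le (by norm_num; linarith [hy.1])
    have : (75 * M : ℝ) < b + 1 := by nlinarith
    exact Nat.lt_succ_iff.1 (by exact_mod_cast this)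
  have hb0 := H.abs_sub_le b (by omega) y ⟨hyb.1, hyb.2.trans (gridPt_mono M (by omega))⟩
  have hf := H.abs_le y ⟨hy0, by linarith [hy.2]⟩
  have hM1 : (1 : ℝ) ≤ M := by exact_mod_cast H.one_le_M
  have hsum : |(P b).eval y - (P (75 * M)).eval y| ≤
      ((b - 75 * M : ℕ) : ℝ) * (K * W * (100 * M) ^ (2 * m - 1)) := by
    rw [sub_eq_sum_Ico_sub (fun i => (P i).eval y) h75]
    refine (abs_sum_le_sum_abs _ _).trans ((sum_le_card_nsmul _ _ _ fun i hi => ?_).trans_eq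
      (by rw [Nat.card_Ico, nsmul_eq_mul]))
    rw [mem_Ico] at hi
    have := h H i (100 * M) y (by omega) (by linarith) (by
      have h1 : |y - gridPt M (i + 1)| ≤ 1 := by
        rw [_root_.abs_le]
        have := H.gridPt_le_one (i := i + 1) (by omega)
        have h0 : 0 ≤ gridPt M (i + 1) := by unfold gridPt; positivity
        constructor <;> linarith [hy.1, hy.2]
      refine h1.trans ?_
      have hi' : (75 * M : ℝ) ≤ i := by exact_mod_cast hi.1
      rw [mul_div_assoc', le_div_iff₀ (by positivity)]
      nlinarith) 0
    simpa using this
  have hcard : ((b - 75 * M : ℕ) : ℝ) ≤ 100 * M := by exact_mod_cast (by omega)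
  have hsq : ((100 : ℝ) * M) ^ (2 * m) ≤ 40000 ^ m * n ^ m := by
    rw [pow_mul, ← mul_pow]
    have : (M : ℝ) ^ 2 ≤ 4 * n := by exact_mod_cast H.sq_le
    gcongr
    linarith
  have h1n : (1 : ℝ) ≤ (n : ℝ) ^ m := one_le_pow₀ (by exact_mod_cast H.one_le_n)
  have hP : (P (75 * M)).eval y =
    f y - (f y - (P b).eval y) - ((P b).eval y - (P (75 * M)).eval y) := by ring
  rw [hP]
  calc _ ≤ F + W + ((b - 75 * M : ℕ) : ℝ) * (K * W * (100 * M) ^ (2 * m - 1)) :=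
        (abs_sub _ _).trans (add_le_add ((abs_sub _ _).trans (add_le_add hf hb0)) hsum)
    _ ≤ F + W + (100 * M) * (K * W * (100 * M) ^ (2 * m - 1)) := by gcongr
    _ = F + W * 1 + K * W * (100 * M) ^ (2 * m) := by
        obtain ⟨k, hk⟩ : ∃ k, 2 * m = k + 1 := ⟨2 * m - 1, by omega⟩
        rw [hk, Nat.add_sub_cancel]
        ring
    _ ≤ F + W * n ^ m + K * W * (40000 ^ m * n ^ m) := by gcongr
    _ = _ := by ring

lemma exists_abs_hasseDeriv_bulk_le (m : ℕ) : ∃ K : ℝ, 0 ≤ K ∧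
    ∀ {n M : ℕ} {f : ℝ → ℝ} {P : ℕ → ℝ[X]} {F W : ℝ}, GridApprox m n M f P F W →
      ∀ x ∈ Set.Icc (0 : ℝ) (1 / 2), ∀ j,
        |(hasseDeriv j (P (75 * M))).eval x| ≤ K * (F + W * n ^ m) * 7 ^ j := by
  obtain ⟨K₁, hK₁, h₁⟩ := exists_abs_eval_bulk_le m
  obtain ⟨K₂, hK₂, h₂⟩ := exists_abs_hasseDeriv_le (2 * m - 1)
  refine ⟨K₂ * (1 + K₁) * 4 ^ (2 * m), by positivity, fun {n M f P F W} H x hx j => ?_⟩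
  have hF := H.F_nonneg
  have hW := H.W_nonneg
  have h := h₂ (P (75 * M)) (9 / 16) (63 / 400) (F + K₁ * W * n ^ m) 4 x (H.natDegree_le _)
    (by norm_num) (fun y hy => h₁ H y ⟨hy.1, hy.2.trans (by norm_num)⟩) (by norm_num)
    (by rw [_root_.abs_le]; constructor <;> linarith [hx.1, hx.2]) j
  refine h.trans ?_
  rw [div_eq_mul_inv, ← inv_pow]
  have h1 : F + K₁ * W * n ^ m ≤ (1 + K₁) * (F + W * n ^ m) := by
    nlinarith [mul_nonneg hK₁ hF, mul_nonneg hW (pow_nonneg H.n_pos.le m)]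
  calc _ ≤ K₂ * ((1 + K₁) * (F + W * n ^ m)) * 4 ^ (2 * m) * 7 ^ j := by
        gcongr
        · norm_num
        · omega
        · norm_num
    _ = _ := by ring

/-- Taylor coefficients of the local polynomials, weighted by the size of the iterated
Bernstein remainders of the corresponding monomials. -/
lemma exists_abs_hasseDeriv_mul_le (m : ℕ) : ∃ K : ℝ, 0 ≤ K ∧
    ∀ {n M : ℕ} {f : ℝ → ℝ} {P : ℕ → ℝ[X]} {F W : ℝ}, GridApprox m n M f P F W →
      ∀ a : ℕ, a ≤ 75 * M → ∀ x ∈ Set.Icc (0 : ℝ) (1 / 2), x ≤ gridPt M (a + 1) →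
        ∀ j ≤ 2 * m - 1, |(hasseDeriv j (P a)).eval x| *
          ((1 / (n : ℝ)) ^ m * regVar n x ^ max (j - m) 1) ≤ K * (W + F / n ^ m) := by
  obtain ⟨K₁, hK₁, h₁⟩ := exists_abs_hasseDeriv_bulk_le m
  obtain ⟨K₂, hK₂, h₂⟩ := exists_abs_hasseDeriv_sub_le m
  refine ⟨K₁ * 7 ^ (2 * m) * 2 ^ (m + 1) + 2 * (K₂ * (40000 ^ m * 40001 ^ (m + 1))),
    by positivity, fun {n M f P F W} H a ha x hx hxa j hj => ?_⟩
  have hF := H.F_nonneg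
  have hW := H.W_nonneg
  have hM := H.M_pos
  have hn := H.n_pos
  have hm := H.one_le_m
  have hx1 : x ∈ Set.Icc (0 : ℝ) 1 := ⟨hx.1, by linarith [hx.2]⟩
  have hd0 := (regVar_pos H.one_le_n hx1).le
  have hd2 := regVar_le_two H.one_le_n hx1
  have hp : max (j - m) 1 ≤ m + 1 := by omega
  set p := max (j - m) 1
  have hM4 : (M : ℝ) ^ 2 ≤ 4 * n := by exact_mod_cast H.sq_le
  have hinv : 1 / (n : ℝ) ≤ 40000 / (100 * M) ^ 2 := by
    rw [div_le_div_iff₀ hn (by positivity)]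
    linarith
  have hd : regVar n x ≤ 40001 * ((a + 1) ^ 2 / (100 * M) ^ 2) := by
    have h1 : x * (1 - x) ≤ (a + 1) ^ 2 / (100 * M) ^ 2 := by
      rw [gridPt_eq] at hxa
      push_cast at hxa
      nlinarith [hx.1]
    have h2 : 40000 / (100 * (M : ℝ)) ^ 2 ≤ 40000 * ((a + 1) ^ 2 / (100 * M) ^ 2) := by
      rw [mul_div_assoc']
      gcongr
      have : (1 : ℝ) ≤ (a + 1) ^ 2 := one_le_pow₀ (by linarith [Nat.cast_nonneg (α := ℝ) a])
      linarith
    unfold regVar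
    linarith
  set w : ℝ := (1 / (n : ℝ)) ^ m * regVar n x ^ p with hw
  have hw0 : 0 ≤ w := by positivity
  have hbulk : |(hasseDeriv j (P (75 * M))).eval x| * w ≤
      K₁ * 7 ^ (2 * m) * 2 ^ (m + 1) * (W + F / n ^ m) := by
    calc _ ≤ (K₁ * (F + W * n ^ m) * 7 ^ j) * ((1 / (n : ℝ)) ^ m * 2 ^ p) := by
          rw [hw]
          gcongr
          exact h₁ H x hx j
      _ ≤ (K₁ * (F + W * n ^ m) * 7 ^ (2 * m)) * ((1 / (n : ℝ)) ^ m * 2 ^ (m + 1)) := by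
          gcongr
          · norm_num
          · omega
          · norm_num
      _ = _ := by
          rw [one_div, inv_pow]
          field_simp
          ring
  have hdiff : ∀ l ∈ Ico a (75 * M),
      |(hasseDeriv j (P (l + 1))).eval x - (hasseDeriv j (P l)).eval x| * w ≤
        K₂ * (40000 ^ m * 40001 ^ (m + 1)) * W * (((a : ℝ) + 1) ^ 2 / ((l : ℝ) + 1) ^ 3) := by
    intro l hl
    rw [mem_Ico] at hl
    have hal : (a : ℝ) + 1 ≤ l + 1 := by exact_mod_cast Nat.succ_le_succ hl.1
    have hlN : (l : ℝ) + 1 ≤ 100 * M := by exact_mod_cast (by omega : l + 1 ≤ 100 * M)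
    have h := h₂ H l (l + 1) x (by omega) (by linarith [Nat.cast_nonneg (α := ℝ) l]) (by
      have : x ≤ gridPt M (l + 1) := hxa.trans (gridPt_mono M (by omega))
      rw [abs_of_nonpos (by linarith), neg_sub]
      refine (sub_le_self _ hx.1).trans ?_
      rw [gridPt_eq, mul_div_assoc']
      push_cast
      gcongr
      nlinarith [Nat.cast_nonneg (α := ℝ) l]) j
    have h' : |(hasseDeriv j (P (l + 1))).eval x - (hasseDeriv j (P l)).eval x| ≤
        K₂ * W * ((l : ℝ) + 1) ^ (2 * m - 1 - j) / ((l + 1) / (100 * M) ^ 2) ^ j := by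
      refine h.trans ?_
      gcongr
      · linarith [Nat.cast_nonneg (α := ℝ) l]
      · norm_num
    have hw' : w ≤ (40000 / (100 * M) ^ 2) ^ m *
        (40001 * (((a : ℝ) + 1) ^ 2 / (100 * M) ^ 2)) ^ p := by
      rw [hw]
      gcongr
    have hkey := sq_mul_pow_le hj hm (by positivity : (0 : ℝ) ≤ a + 1) hal hlN
    have hc : (40001 : ℝ) ^ p ≤ 40001 ^ (m + 1) := pow_le_pow_right₀ (by norm_num) hp
    calc _ ≤ (K₂ * W * ((l : ℝ) + 1) ^ (2 * m - 1 - j) / ((l + 1) / (100 * M) ^ 2) ^ j) *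
          ((40000 / (100 * M) ^ 2) ^ m *
          (40001 * (((a : ℝ) + 1) ^ 2 / (100 * M) ^ 2)) ^ p) := by gcongr
      _ = K₂ * W * (40000 ^ m * 40001 ^ p) * ((((a : ℝ) + 1) ^ 2) ^ p *
          ((l : ℝ) + 1) ^ (2 * m - 1 - j) * ((100 * (M : ℝ)) ^ 2) ^ j /
          (((l : ℝ) + 1) ^ j * ((100 * (M : ℝ)) ^ 2) ^ m * ((100 * (M : ℝ)) ^ 2) ^ p)) := by
          simp only [div_pow, mul_pow (40001 : ℝ)]
          field_simp
      _ ≤ K₂ * W * (40000 ^ m * 40001 ^ (m + 1)) *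
          (((a : ℝ) + 1) ^ 2 / ((l : ℝ) + 1) ^ 3) := by
          gcongr ?_ * ?_
          · gcongr
          · rw [div_le_div_iff₀ (by positivity) (by positivity)]
            refine hkey.trans (le_of_eq ?_)
            ring
      _ = _ := by ring
  have hsplit : (hasseDeriv j (P a)).eval x = (hasseDeriv j (P (75 * M))).eval x -
      ∑ l ∈ Ico a (75 * M), ((hasseDeriv j (P (l + 1))).eval x - (hasseDeriv j (P l)).eval x) := by
    rw [← sub_eq_sum_Ico_sub (fun l => (hasseDeriv j (P l)).eval x) ha]
    ring
  calc _ ≤ |(hasseDeriv j (P (75 * M))).eval x| * w + ∑ l ∈ Ico a (75 * M),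
        |(hasseDeriv j (P (l + 1))).eval x - (hasseDeriv j (P l)).eval x| * w := by
        rw [hsplit, ← sum_mul, ← add_mul]
        gcongr
        exact (abs_sub _ _).trans (by gcongr; exact abs_sum_le_sum_abs _ _)
    _ ≤ K₁ * 7 ^ (2 * m) * 2 ^ (m + 1) * (W + F / n ^ m) + K₂ * (40000 ^ m * 40001 ^ (m + 1)) * W *
        ∑ l ∈ Ico a (75 * M), (((a : ℝ) + 1) ^ 2 / ((l : ℝ) + 1) ^ 3) := by
        rw [mul_sum]
        exact add_le_add hbulk (sum_le_sum hdiff)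
    _ ≤ K₁ * 7 ^ (2 * m) * 2 ^ (m + 1) * (W + F / n ^ m) + K₂ * (40000 ^ m * 40001 ^ (m + 1)) *
        (W + F / n ^ m) * 2 := by
        gcongr
        · exact le_add_of_nonneg_right (by positivity)
        · exact sum_Ico_sq_div_cube_le a _ ha
    _ = _ := by ring

lemma exists_abs_bootIter_eval_le (m : ℕ) : ∃ K : ℝ, 0 ≤ K ∧
    ∀ {n M : ℕ} {f : ℝ → ℝ} {P : ℕ → ℝ[X]} {F W : ℝ}, GridApprox m n M f P F W →
      ∀ a : ℕ, a ≤ 75 * M → ∀ x ∈ Set.Icc (0 : ℝ) (1 / 2), x ≤ gridPt M (a + 1) →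
        |bootIter n (fun y => (P a).eval y) m x| ≤ K * (W + F / n ^ m) := by
  rcases Nat.eq_zero_or_pos m with rfl | hm
  · exact ⟨0, le_rfl, fun H => absurd H.one_le_m (by norm_num)⟩
  obtain ⟨s, rfl⟩ : ∃ s, m = s + 1 := ⟨m - 1, by omega⟩
  obtain ⟨K, hK, h⟩ := exists_abs_hasseDeriv_mul_le (s + 1)
  choose A hA0 hA using exists_abs_eval_one_sub_bernOp_pow_le s
  refine ⟨∑ j ∈ range (2 * (s + 1) - 1 + 1), A j * K,
    sum_nonneg fun j _ => mul_nonneg (hA0 j) hK, fun {n M f P F W} H a ha x hx hxa => ?_⟩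
  have hP : P a = ∑ j ∈ range (2 * (s + 1) - 1 + 1),
      (hasseDeriv j (P a)).eval x • (X - C x) ^ j := by
    refine Polynomial.funext fun y => ?_
    rw [eval_eq_sum_hasseDeriv (P a) _ (H.natDegree_le a) x y, eval_finsetSum]
    simp
  rw [bootIter_eval]
  conv_lhs => rw [hP]
  beta_reduce
  rw [map_sum, eval_finsetSum, sum_mul]
  refine (abs_sum_le_sum_abs _ _).trans (sum_le_sum fun j hj => ?_)
  rw [map_smul, eval_smul, smul_eq_mul, abs_mul]
  have h1 := hA j n H.one_le_n x ⟨hx.1, by linarith [hx.2]⟩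
  have h2 := h H a ha x hx hxa j (by simpa [Nat.lt_succ_iff] using hj)
  calc _ ≤ |(hasseDeriv j (P a)).eval x| *
        (A j * ((1 / (n : ℝ)) ^ (s + 1) * regVar n x ^ max (j - (s + 1)) 1)) := by gcongr
    _ = A j * (|(hasseDeriv j (P a)).eval x| *
        ((1 / (n : ℝ)) ^ (s + 1) * regVar n x ^ max (j - (s + 1)) 1)) := by ring
    _ ≤ A j * (K * _) := mul_le_mul_of_nonneg_left h2 (hA0 j)
    _ = _ := by ring

end GridApprox

lemma sq_sqrt_regVar_div {n : ℕ} (hn : 1 ≤ n) {x : ℝ} (hx : x ∈ Set.Icc (0 : ℝ) 1) :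
    √(regVar n x / n) ^ 2 = regVar n x / n :=
  Real.sq_sqrt (regVar_div_nonneg hn hx)

lemma sqrt_regVar_div_pos {n : ℕ} (hn : 1 ≤ n) {x : ℝ} (hx : x ∈ Set.Icc (0 : ℝ) 1) :
    0 < √(regVar n x / n) :=
  Real.sqrt_pos.2 (div_pos (regVar_pos hn hx) (by exact_mod_cast hn))

/-- The distance in the square root scale against the normalised distance. -/
lemma mul_abs_sqrt_sub_sqrt_le {n : ℕ} (hn : 1 ≤ n) {N x y : ℝ}
    (hNn : N ^ 2 ≤ 40000 * n) (hx : x ∈ Set.Icc (0 : ℝ) 1) (hy : 0 ≤ y) :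
    N * |√y - √x| ≤ 1 + 50000 * (|y - x| / √(regVar n x / n)) := by
  have hη := sqrt_regVar_div_pos hn hx
  have hη2 := sq_sqrt_regVar_div hn hx
  have hn0 : (0 : ℝ) < n := by exact_mod_cast hn
  set η := √(regVar n x / n)
  set v := N * |√y - √x| with hv
  rcases le_or_gt v 1 with h1 | h1
  · exact h1.trans (le_add_of_nonneg_right (by positivity))
  refine le_add_of_nonneg_of_le zero_le_one ?_
  rw [mul_div_assoc', le_div_iff₀ hη]
  refine le_of_sq_le_sq ?_ (by positivity)
  have hsx := Real.sqrt_nonneg x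
  have hsy := Real.sqrt_nonneg y
  have hfac : (y - x) ^ 2 = (√y - √x) ^ 2 * (√y + √x) ^ 2 := by
    rw [← mul_pow]
    congr 1
    nlinarith [Real.sq_sqrt hx.1, Real.sq_sqrt hy]
  have hv2 : v ^ 2 = N ^ 2 * (√y - √x) ^ 2 := by rw [hv, mul_pow, sq_abs]
  have e1 : v ^ 2 * x ≤ N ^ 2 * (y - x) ^ 2 := by
    rw [hv2, hfac, mul_assoc]
    gcongr
    nlinarith [Real.sq_sqrt hx.1, mul_nonneg hsx hsy, sq_nonneg √y]
  have e2 : (√y - √x) ^ 4 ≤ (y - x) ^ 2 := by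
    rw [hfac, show (√y - √x) ^ 4 = (√y - √x) ^ 2 * (√y - √x) ^ 2 by ring]
    refine mul_le_mul_of_nonneg_left ?_ (sq_nonneg _)
    nlinarith [mul_nonneg hsx hsy]
  have e3 : v ^ 2 ≤ 40000 ^ 2 * n ^ 2 * (y - x) ^ 2 := by
    calc v ^ 2 ≤ v ^ 4 := pow_le_pow_right₀ h1.le (by norm_num)
      _ = (N ^ 2) ^ 2 * (√y - √x) ^ 4 := by
          rw [show v ^ 4 = (v ^ 2) ^ 2 by ring, hv2]; ring
      _ ≤ (40000 * n) ^ 2 * (y - x) ^ 2 := by gcongr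
      _ = _ := by ring
  have e4 : v ^ 2 * x ≤ 40000 * n * (y - x) ^ 2 :=
    e1.trans (mul_le_mul_of_nonneg_right hNn (sq_nonneg _))
  have e5 : regVar n x / n ≤ (x + 1 / n) / n := by
    unfold regVar
    gcongr
    nlinarith [hx.1, hx.2]
  calc (v * η) ^ 2 = v ^ 2 * (regVar n x / n) := by rw [mul_pow v η, hη2]
    _ ≤ v ^ 2 * ((x + 1 / n) / n) := mul_le_mul_of_nonneg_left e5 (sq_nonneg _)
    _ = v ^ 2 * x / n + v ^ 2 / n ^ 2 := by field_simp
    _ ≤ 40000 * n * (y - x) ^ 2 / n + 40000 ^ 2 * n ^ 2 * (y - x) ^ 2 / n ^ 2 := by gcongr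
    _ = (40000 + 40000 ^ 2) * (y - x) ^ 2 := by field_simp
    _ ≤ 50000 ^ 2 * (y - x) ^ 2 := mul_le_mul_of_nonneg_right (by norm_num) (sq_nonneg _)
    _ = (50000 * |y - x|) ^ 2 := by rw [mul_pow (50000 : ℝ), sq_abs]

/-- An iterated bootstrap of a function of polynomial growth around the evaluation point. -/
lemma exists_abs_bootIter_le_of_growth (m p q : ℕ) (hp : Even p) (hq : Even q) :
    ∃ K : ℝ, 0 ≤ K ∧ ∀ (n : ℕ) (x α β γ : ℝ) (g : ℝ → ℝ), 1 ≤ n → x ∈ Set.Icc (0 : ℝ) 1 →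
      0 ≤ α → 0 ≤ β → 0 ≤ γ →
      (∀ y ∈ Set.Icc (0 : ℝ) 1, |g y| ≤ α + β * |y - x| ^ p + γ * |y - x| ^ q) →
        |bootIter n g m x| ≤ K * (α + β * √(regVar n x / n) ^ p + γ * √(regVar n x / n) ^ q) := by
  choose A hA0 hA using exists_abs_eval_one_add_bernOp_pow_le m
  refine ⟨A 0 + A p + A q, by have := hA0 0; have := hA0 p; have := hA0 q; positivity,
    fun n x α β γ g hn hx hα hβ hγ hg => ?_⟩
  have h0 := hA0 0
  have h1 := hA0 p
  have h2 := hA0 q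
  have h := abs_bootIter_le n (f := g)
    (q := α • (X - C x) ^ 0 + β • (X - C x) ^ p + γ • (X - C x) ^ q) (fun y hy => by
      have := hg y hy
      rw [hp.pow_abs, hq.pow_abs] at this
      simpa using this) m x hx
  refine h.trans ?_
  simp only [map_add, map_smul, eval_add, eval_smul, smul_eq_mul]
  have b0 := (le_abs_self _).trans (hA 0 n hn x hx)
  have b1 := (le_abs_self _).trans (hA p n hn x hx)
  have b2 := (le_abs_self _).trans (hA q n hn x hx)
  set η := √(regVar n x / n)
  have hη : 0 ≤ η := Real.sqrt_nonneg _
  calc _ ≤ α * (A 0 * η ^ 0) + β * (A p * η ^ p) + γ * (A q * η ^ q) := by gcongr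
    _ = A 0 * α + A p * (β * η ^ p) + A q * (γ * η ^ q) := by ring
    _ ≤ (A 0 + A p + A q) * α + (A 0 + A p + A q) * (β * η ^ p) +
        (A 0 + A p + A q) * (γ * η ^ q) := by
        gcongr <;> linarith
    _ = _ := by ring

namespace GridApprox

lemma sq_le_mul {m n M : ℕ} {f : ℝ → ℝ} {P : ℕ → ℝ[X]} {F W : ℝ}
    (H : GridApprox m n M f P F W) : (100 * (M : ℝ)) ^ 2 ≤ 40000 * n := by
  have hM4 : (M : ℝ) ^ 2 ≤ 4 * n := by exact_mod_cast H.sq_le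
  rw [mul_pow]
  linarith

lemma exists_abs_sub_le_near (m : ℕ) : ∃ K : ℝ, 0 ≤ K ∧
    ∀ {n M : ℕ} {f : ℝ → ℝ} {P : ℕ → ℝ[X]} {F W : ℝ}, GridApprox m n M f P F W →
      ∀ (a : ℕ) (x : ℝ), a ≤ 75 * M → x ∈ Set.Icc (0 : ℝ) (1 / 2) →
        (a : ℝ) ≤ 100 * M * √x → 100 * M * √x < a + 1 → ∀ y ∈ Set.Icc (0 : ℝ) (3 / 4),
          |f y - (P a).eval y| ≤ K * W * (1 + (|y - x| / √(regVar n x / n)) ^ (4 * m)) := by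
  obtain ⟨K, hK, h⟩ := exists_abs_sub_le_pow m
  refine ⟨K * (2 ^ (4 * m - 1) * 50000 ^ (4 * m)), by positivity,
    fun {n M f P F W} H a x ha hx ha1 ha2 y hy => ?_⟩
  have hW := H.W_nonneg
  have hM := H.M_pos
  have hx1 : x ∈ Set.Icc (0 : ℝ) 1 := ⟨hx.1, by linarith [hx.2]⟩
  obtain ⟨b, hyb, hb1, hb2⟩ := H.exists_gridPt_le hy.1
  have hb := H.index_le hy.1 hb1 (R := 87) (by norm_num; linarith [hy.2])
  have hv := mul_abs_sqrt_sub_sqrt_le H.one_le_n H.sq_le_mul hx1 hy.1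
  set w := |y - x| / √(regVar n x / n)
  have hw : 0 ≤ w := by positivity
  have hba : |(b : ℝ) - a| ≤ 1 + 100 * M * |√y - √x| := by
    have h1 : 100 * M * |√y - √x| = |100 * M * √y - 100 * M * √x| := by
      rw [← mul_sub, abs_mul, abs_of_pos (by positivity : (0:ℝ) < 100 * M)]
    rw [h1, _root_.abs_le]
    have h2 := neg_abs_le (100 * M * √y - 100 * M * √x)
    have h3 := le_abs_self (100 * M * √y - 100 * M * √x)
    constructor <;> linarith
  have hk : |(b : ℝ) - a| + 1 ≤ 3 + 50000 * w := by linarith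
  calc _ ≤ K * W * (|(b : ℝ) - a| + 1) ^ (4 * m) := h H a b (by omega) hb y hyb
    _ ≤ K * W * (3 + 50000 * w) ^ (4 * m) := by gcongr
    _ ≤ K * W * (2 ^ (4 * m - 1) * (3 ^ (4 * m) + (50000 * w) ^ (4 * m))) := by
        gcongr
        exact add_pow_le (by norm_num) (by positivity) _
    _ ≤ K * W * (2 ^ (4 * m - 1) * (50000 ^ (4 * m) + (50000 * w) ^ (4 * m))) := by
        gcongr
        norm_num
    _ = _ := by rw [mul_pow]; ring

lemma exists_abs_sub_le_far (m : ℕ) : ∃ K : ℝ, 0 ≤ K ∧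
    ∀ {n M : ℕ} {f : ℝ → ℝ} {P : ℕ → ℝ[X]} {F W : ℝ}, GridApprox m n M f P F W →
      ∀ a : ℕ, a ≤ 75 * M → ∀ y ∈ Set.Icc (0 : ℝ) 1,
        |f y - (P a).eval y| ≤ K * (F + W) * n ^ (2 * m) := by
  obtain ⟨K, hK, h⟩ := exists_abs_hasseDeriv_le (2 * m - 1)
  refine ⟨1 + K * 40000 ^ (2 * m), by positivity, fun {n M f P F W} H a ha y hy => ?_⟩
  have hF := H.F_nonneg
  have hW := H.W_nonneg
  have hM := H.M_pos
  have hn1 : (1 : ℝ) ≤ n := by exact_mod_cast H.one_le_n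
  have hM1 : (1 : ℝ) ≤ M := by exact_mod_cast H.one_le_M
  have hl : gridPt M a + (4 * a + 4) / (100 * M) ^ 2 = gridPt M (a + 2) := by
    rw [gridPt_eq, gridPt_eq]
    push_cast
    field_simp
    ring
  have h0 : 0 ≤ gridPt M a := by unfold gridPt; positivity
  have h1 := H.gridPt_le_one (i := a + 2) (by have := H.one_le_M; omega)
  have h2 : gridPt M a ≤ gridPt M (a + 2) := gridPt_mono M (by omega)
  have := h (P a) (gridPt M a) ((4 * a + 4) / (100 * M) ^ 2) (F + W) ((100 * M) ^ 2) y
    (H.natDegree_le a) (by positivity) (fun z hz => by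
      rw [hl] at hz
      have e1 := H.abs_sub_le a (by omega) z hz
      have e2 := H.abs_le z ⟨h0.trans hz.1, hz.2.trans h1⟩
      calc _ = |f z - (f z - (P a).eval z)| := by congr 1; ring
        _ ≤ _ := (abs_sub _ _).trans (add_le_add e2 e1)) (one_le_pow₀ (by linarith))
    (by
      rw [mul_div_cancel₀ _ (by positivity), _root_.abs_le]
      have := Nat.cast_nonneg (α := ℝ) a
      constructor <;> linarith [hy.1, hy.2]) 0
  simp only [hasseDeriv_zero', Nat.sub_zero, pow_zero, div_one] at this
  have hQ : ((100 * (M : ℝ)) ^ 2) ^ (2 * m - 1) ≤ 40000 ^ (2 * m) * n ^ (2 * m) := by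
    rw [← mul_pow]
    calc _ ≤ (40000 * (n : ℝ)) ^ (2 * m - 1) := by gcongr; exact H.sq_le_mul
      _ ≤ _ := pow_le_pow_right₀ (by linarith) (by omega)
  have hnm : (1 : ℝ) ≤ n ^ (2 * m) := one_le_pow₀ hn1
  calc _ ≤ F + K * (F + W) * ((100 * M) ^ 2) ^ (2 * m - 1) :=
        (abs_sub _ _).trans (add_le_add (H.abs_le y hy) this)
    _ ≤ (F + W) * n ^ (2 * m) + K * (F + W) * (40000 ^ (2 * m) * n ^ (2 * m)) := by
        gcongr
        nlinarith
    _ = _ := by ring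

lemma exists_abs_bootIter_sub_le (m : ℕ) : ∃ K : ℝ, 0 ≤ K ∧
    ∀ {n M : ℕ} {f : ℝ → ℝ} {P : ℕ → ℝ[X]} {F W : ℝ}, GridApprox m n M f P F W →
      ∀ (a : ℕ) (x : ℝ), a ≤ 75 * M → x ∈ Set.Icc (0 : ℝ) (1 / 2) →
        (a : ℝ) ≤ 100 * M * √x → 100 * M * √x < a + 1 →
          |bootIter n (fun y => f y - (P a).eval y) m x| ≤ K * (W + F / n ^ m) := by
  obtain ⟨K₁, hK₁, h₁⟩ := exists_abs_sub_le_near m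
  obtain ⟨K₂, hK₂, h₂⟩ := exists_abs_sub_le_far m
  obtain ⟨K₃, hK₃, h₃⟩ := exists_abs_bootIter_le_of_growth m (4 * m) (6 * m)
    ⟨2 * m, by ring⟩ ⟨3 * m, by ring⟩
  refine ⟨K₃ * (2 * K₁ + K₂ * 4 ^ (6 * m) * 2 ^ (3 * m)), by positivity,
    fun {n M f P F W} H a x ha hx ha1 ha2 => ?_⟩
  have hF := H.F_nonneg
  have hW := H.W_nonneg
  have hn := H.n_pos
  have hx1 : x ∈ Set.Icc (0 : ℝ) 1 := ⟨hx.1, by linarith [hx.2]⟩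
  have hη := sqrt_regVar_div_pos H.one_le_n hx1
  have hη2 := sq_sqrt_regVar_div H.one_le_n hx1
  have hd2 := regVar_le_two H.one_le_n hx1
  have hmain := h₃ n x (K₁ * W) (K₁ * W / √(regVar n x / n) ^ (4 * m))
    (K₂ * (F + W) * n ^ (2 * m) * 4 ^ (6 * m)) (fun y => f y - (P a).eval y) H.one_le_n hx1
    (by positivity) (by positivity) (by positivity) (fun y hy => by
      rcases le_total y (3 / 4) with hy' | hy'
      · refine (h₁ H a x ha hx ha1 ha2 y ⟨hy.1, hy'⟩).trans ?_
        refine le_trans (le_of_eq ?_) (le_add_of_nonneg_right (by positivity))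
        rw [div_pow]
        ring
      · refine (h₂ H a ha y hy).trans ?_
        refine le_add_of_nonneg_of_le (by positivity) ?_
        have : 1 ≤ (4 * |y - x|) ^ (6 * m) := one_le_pow₀ (by
          rw [abs_of_nonneg (by linarith [hx.2])]
          linarith [hx.2])
        rw [mul_pow] at this
        rw [mul_assoc _ (4 ^ (6 * m) : ℝ)]
        exact le_mul_of_one_le_right (by positivity) this)
  refine hmain.trans ?_
  set η := √(regVar n x / n)
  have hη6 : η ^ (6 * m) ≤ 2 ^ (3 * m) / n ^ (3 * m) := by
    rw [show 6 * m = 2 * (3 * m) by ring, pow_mul, hη2, ← div_pow]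
    have := (regVar_pos H.one_le_n hx1).le
    gcongr
  have hnm : F / (n : ℝ) ^ m + W / n ^ m ≤ W + F / n ^ m := by
    rw [add_comm]
    gcongr
    exact div_le_self hW (one_le_pow₀ (by exact_mod_cast H.one_le_n))
  rw [mul_assoc K₃]
  gcongr
  calc _ ≤ K₁ * W + K₁ * W / η ^ (4 * m) * η ^ (4 * m) +
        K₂ * (F + W) * n ^ (2 * m) * 4 ^ (6 * m) * (2 ^ (3 * m) / n ^ (3 * m)) := by gcongr
    _ = 2 * K₁ * W + K₂ * 4 ^ (6 * m) * 2 ^ (3 * m) * (F / (n : ℝ) ^ m + W / n ^ m) := by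
        rw [show 3 * m = m + 2 * m by ring, pow_add (n : ℝ)]
        field_simp
        ring
    _ ≤ 2 * K₁ * (W + F / n ^ m) + K₂ * 4 ^ (6 * m) * 2 ^ (3 * m) * (W + F / n ^ m) := by
        gcongr
        exact le_add_of_nonneg_right (by positivity)
    _ = _ := by ring

lemma exists_abs_bootIter_le (m : ℕ) : ∃ K : ℝ, 0 ≤ K ∧
    ∀ {n M : ℕ} {f : ℝ → ℝ} {P : ℕ → ℝ[X]} {F W : ℝ}, GridApprox m n M f P F W →
      ∀ x ∈ Set.Icc (0 : ℝ) (1 / 2), |bootIter n f m x| ≤ K * (W + F / n ^ m) := by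
  obtain ⟨K₁, hK₁, h₁⟩ := exists_abs_bootIter_sub_le m
  obtain ⟨K₂, hK₂, h₂⟩ := exists_abs_bootIter_eval_le m
  refine ⟨K₁ + K₂, by positivity, fun {n M f P F W} H x hx => ?_⟩
  obtain ⟨a, hxa, ha1, ha2⟩ := H.exists_gridPt_le hx.1
  have ha := H.index_le hx.1 ha1 (R := 75) (by norm_num; linarith [hx.2])
  have e1 := h₁ H a x ha hx ha1 ha2
  have e2 := h₂ H a ha x hx hxa.2
  rw [bootIter_sub] at e1
  calc |bootIter n f m x| = |(bootIter n f m x - bootIter n (fun y => (P a).eval y) m x) +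
        bootIter n (fun y => (P a).eval y) m x| := by congr 1; ring
    _ ≤ _ := (abs_add_le _ _).trans (by rw [add_mul]; exact add_le_add e1 e2)

end GridApprox

/-! ### Reduction to the modulus of smoothness -/

/-- The symmetric differences of order `2 m` of `f` inside `[0,1]` whose step is at most
`√(u (1 - u) / n)`, where `u` is their centre, are bounded by `ω`. -/
def WeightedDiffBdd (m n : ℕ) (f : ℝ → ℝ) (ω : ℝ) : Prop :=
  ∀ v s : ℝ, v ∈ Set.Icc (0 : ℝ) 1 → v + (2 * m : ℕ) * s ∈ Set.Icc (0 : ℝ) 1 →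
    s ^ 2 * n ≤ (v + m * s) * (1 - (v + m * s)) → |(fwdDiff s)^[2 * m] f v| ≤ ω

lemma sq_mul_le_of_mem_gridPt {m n M i : ℕ} (hm : 1 ≤ m) (hM : 1 ≤ M) (hnM : n ≤ M ^ 2)
    (hi : i ≤ 87 * M) {v s : ℝ} (hv : v ∈ Set.Icc (gridPt M i) (gridPt M (i + 2)))
    (hvs : v + (2 * m : ℕ) * s ∈ Set.Icc (gridPt M i) (gridPt M (i + 2))) :
    s ^ 2 * n ≤ (v + m * s) * (1 - (v + m * s)) := by
  have hM' : (1 : ℝ) ≤ M := by exact_mod_cast hM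
  have hm' : (1 : ℝ) ≤ m := by exact_mod_cast hm
  have hn' : (n : ℝ) ≤ (M : ℝ) ^ 2 := by exact_mod_cast hnM
  have hi' : (i : ℝ) ≤ 87 * M := by exact_mod_cast hi
  have hi0 : (0 : ℝ) ≤ i := i.cast_nonneg
  have hb : (0 : ℝ) < (100 * M) ^ 2 := by positivity
  rw [gridPt_eq, gridPt_eq] at hv hvs
  push_cast at hv hvs
  obtain ⟨hv1, hv2⟩ := hv
  obtain ⟨hs1, hs2⟩ := hvs
  have htop : ((i : ℝ) + 2) ^ 2 / (100 * M) ^ 2 ≤ 4 / 5 := by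
    rw [div_le_iff₀ hb]
    nlinarith
  have hlow : (i : ℝ) ^ 2 / (100 * M) ^ 2 + |s| ≤ v + m * s := by
    rcases abs_cases s with ⟨h, h'⟩ | ⟨h, h'⟩ <;> rw [h] <;> nlinarith
  have hup : v + m * s ≤ 4 / 5 := by linarith
  have hwidth : 2 * |s| ≤ ((i : ℝ) + 2) ^ 2 / (100 * M) ^ 2 - (i : ℝ) ^ 2 / (100 * M) ^ 2 := by
    rcases abs_cases s with ⟨h, h'⟩ | ⟨h, h'⟩ <;> rw [h] <;> nlinarith
  have hσ : |s| * (100 * M) ^ 2 ≤ 2 * i + 2 := by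
    rw [← sub_div, le_div_iff₀ hb] at hwidth
    linarith
  have hσ0 : 0 ≤ |s| * (100 * M) ^ 2 := by positivity
  have hkey : s ^ 2 * M ^ 2 ≤ ((i : ℝ) ^ 2 / (100 * M) ^ 2 + |s|) / 5 := by
    rw [← mul_le_mul_iff_left₀ hb]
    have h1 : ((i : ℝ) ^ 2 / (100 * M) ^ 2 + |s|) / 5 * (100 * M) ^ 2 =
        ((i : ℝ) ^ 2 + |s| * (100 * M) ^ 2) / 5 := by field_simp
    have h2 : s ^ 2 * M ^ 2 * (100 * M) ^ 2 = (|s| * (100 * M) ^ 2) ^ 2 / 10000 := by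
      rw [mul_pow |s|, sq_abs]
      ring
    rw [h1, h2]
    generalize |s| * (100 * (M : ℝ)) ^ 2 = σ at *
    nlinarith [mul_le_mul_of_nonneg_left hσ hσ0, sq_nonneg (σ - i)]
  have hlow0 : 0 ≤ (i : ℝ) ^ 2 / (100 * M) ^ 2 + |s| := by positivity
  calc s ^ 2 * n ≤ s ^ 2 * M ^ 2 := mul_le_mul_of_nonneg_left hn' (sq_nonneg s)
    _ ≤ ((i : ℝ) ^ 2 / (100 * M) ^ 2 + |s|) / 5 := hkey
    _ ≤ (v + m * s) * (1 / 5) := by linarith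
    _ ≤ _ := mul_le_mul_of_nonneg_left (by linarith) (hlow0.trans hlow)

lemma exists_gridApprox {m : ℕ} (hm : 1 ≤ m) : ∃ K : ℝ, 0 ≤ K ∧
    ∀ {n : ℕ} {f : ℝ → ℝ} {F ω : ℝ}, 1 ≤ n → Continuous f → 0 ≤ ω →
      (∀ y ∈ Set.Icc (0 : ℝ) 1, |f y| ≤ F) → WeightedDiffBdd m n f ω →
        ∃ (M : ℕ) (P : ℕ → ℝ[X]), GridApprox m n M f P F (K * ω) := by
  obtain ⟨K, hK, h⟩ := exists_polynomial_of_fwdDiffBdd (r := 2 * m) (by omega)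
  refine ⟨K, hK, fun {n f F ω} hn hf hω hF hd => ?_⟩
  have hM : 1 ≤ n.sqrt + 1 := by omega
  have hs1 : 1 ≤ n.sqrt := Nat.le_sqrt.2 (by omega)
  have hs2 := Nat.sqrt_le' n
  have hnM : n ≤ (n.sqrt + 1) ^ 2 := (Nat.lt_succ_sqrt' n).le
  set M := n.sqrt + 1
  have hP : ∀ i : ℕ, ∃ P : ℝ[X], P.natDegree ≤ 2 * m - 1 ∧ (i ≤ 87 * M →
      ∀ y ∈ Set.Icc (gridPt M i) (gridPt M (i + 2)), |f y - P.eval y| ≤ K * ω) := by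
    intro i
    by_cases hi : i ≤ 87 * M
    · have hlt : gridPt M i < gridPt M (i + 2) := by
        have : (0 : ℝ) < 100 * M := by exact_mod_cast (by omega : 0 < 100 * M)
        unfold gridPt
        gcongr
        simp
      have hsub : Set.Icc (gridPt M i) (gridPt M (i + 2)) ⊆ Set.Icc (0 : ℝ) 1 :=
        Set.Icc_subset_Icc (gridPt_mem_Icc hM (by omega)).1 (gridPt_mem_Icc hM (by omega)).2
      obtain ⟨P, hP1, hP2⟩ := h f _ _ ω hf hω hlt fun v s hv hvs =>
        hd v s (hsub hv) (hsub hvs) (sq_mul_le_of_mem_gridPt hm hM hnM hi hv hvs)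
      exact ⟨P, hP1, fun _ => hP2⟩
    · exact ⟨0, by simp, fun h => absurd h hi⟩
  choose P hP1 hP2 using hP
  exact ⟨M, P, hm, hn, hM, hnM, by simp only [M]; nlinarith, hP1, hP2, hF⟩

lemma bernstein'_comp_one_sub {n : ℕ} (hn : 1 ≤ n) (f : ℝ → ℝ) (x : ℝ) :
    bernstein' n (fun y => f (1 - y)) x = bernstein' n f (1 - x) := by
  have hn0 : (n : ℝ) ≠ 0 := by exact_mod_cast (by omega : n ≠ 0)
  unfold bernstein'
  rw [← sum_range_reflect]
  refine sum_congr rfl fun k hk => ?_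
  have hk' : k ≤ n := by simpa [Nat.lt_succ_iff] using hk
  beta_reduce
  rw [show n + 1 - 1 - k = n - k by omega, Nat.choose_symm hk', Nat.sub_sub_self hk',
    Nat.cast_sub hk', sub_sub_cancel, show 1 - ((n : ℝ) - k) / n = k / n by field_simp; ring]
  ring

lemma bootIter_comp_one_sub {n : ℕ} (hn : 1 ≤ n) (f : ℝ → ℝ) (m : ℕ) :
    bootIter n (fun y => f (1 - y)) m = fun x => bootIter n f m (1 - x) := by
  induction m with
  | zero => rfl
  | succ m ih =>
    funext x
    simp only [bootIter, ih, bernstein'_comp_one_sub hn]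

lemma fwdDiff_iter_comp_one_sub (f : ℝ → ℝ) (r : ℕ) (s v : ℝ) :
    (fwdDiff s)^[r] (fun y => f (1 - y)) v = (fwdDiff (-s))^[r] f (1 - v) := by
  rw [fwdDiff_iter_eq_sum, fwdDiff_iter_eq_sum]
  refine sum_congr rfl fun k _ => ?_
  ring_nf

lemma WeightedDiffBdd.comp_one_sub {m n : ℕ} {f : ℝ → ℝ} {ω : ℝ} (h : WeightedDiffBdd m n f ω) :
    WeightedDiffBdd m n (fun y => f (1 - y)) ω := by
  intro v s hv hvs hs
  rw [fwdDiff_iter_comp_one_sub]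
  refine h _ _ ⟨by linarith [hv.2], by linarith [hv.1]⟩
    ⟨by linarith [hvs.2], by linarith [hvs.1]⟩ ?_
  linarith

lemma exists_abs_bootIter_le_of_weightedDiffBdd {m : ℕ} (hm : 1 ≤ m) : ∃ K : ℝ, 0 ≤ K ∧
    ∀ {n : ℕ} {f : ℝ → ℝ} {F ω : ℝ}, 1 ≤ n → Continuous f → 0 ≤ ω →
      (∀ y ∈ Set.Icc (0 : ℝ) 1, |f y| ≤ F) → WeightedDiffBdd m n f ω →
        ∀ x ∈ Set.Icc (0 : ℝ) 1, |bootIter n f m x| ≤ K * (ω + F / n ^ m) := by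
  obtain ⟨K₁, hK₁, h₁⟩ := exists_gridApprox hm
  obtain ⟨K₂, hK₂, h₂⟩ := GridApprox.exists_abs_bootIter_le m
  have hhalf : ∀ {n : ℕ} {f : ℝ → ℝ} {F ω : ℝ}, 1 ≤ n → Continuous f → 0 ≤ ω →
      (∀ y ∈ Set.Icc (0 : ℝ) 1, |f y| ≤ F) → WeightedDiffBdd m n f ω →
        ∀ x ∈ Set.Icc (0 : ℝ) (1 / 2),
          |bootIter n f m x| ≤ K₂ * (K₁ + 1) * (ω + F / n ^ m) := by
    intro n f F ω hn hf hω hF hd x hx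
    obtain ⟨M, P, H⟩ := h₁ hn hf hω hF hd
    have hF0 : 0 ≤ F := H.F_nonneg
    refine (h₂ H x hx).trans ?_
    rw [mul_assoc]
    refine mul_le_mul_of_nonneg_left ?_ hK₂
    have : 0 ≤ F / (n : ℝ) ^ m := by positivity
    nlinarith [mul_nonneg hK₁ this]
  refine ⟨K₂ * (K₁ + 1), by positivity, fun {n f F ω} hn hf hω hF hd x hx => ?_⟩
  rcases le_total x (1 / 2) with h | h
  · exact hhalf hn hf hω hF hd x ⟨hx.1, h⟩
  · have := hhalf hn (f := fun y => f (1 - y)) (by fun_prop) hω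
      (fun y hy => hF _ ⟨by linarith [hy.2], by linarith [hy.1]⟩) hd.comp_one_sub (1 - x)
      ⟨by linarith [hx.2], by linarith⟩
    simpa only [bootIter_comp_one_sub hn, sub_sub_cancel] using this

/-- The symmetric difference as an iterated forward difference. -/
lemma ditzSymmDiff_eq_fwdDiff_iter {r : ℕ} {s x : ℝ} {f : ℝ → ℝ}
    (h₁ : x - r * s / 2 ∈ Set.Icc (0 : ℝ) 1) (h₂ : x + r * s / 2 ∈ Set.Icc (0 : ℝ) 1) :
    ditzSymmDiff r s f x = (fwdDiff s)^[r] f (x - r * s / 2) := by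
  rw [ditzSymmDiff, if_pos ⟨h₁, h₂⟩, fwdDiff_iter_eq_sum, ← sum_range_reflect]
  refine sum_congr rfl fun k hk => ?_
  have hk' : k ≤ r := by simpa [Nat.lt_succ_iff] using hk
  rw [show r + 1 - 1 - k = r - k by omega, Nat.choose_symm hk', Nat.cast_sub hk']
  ring_nf

lemma fwdDiff_iter_neg (f : ℝ → ℝ) (r : ℕ) (s v : ℝ) :
    (fwdDiff s)^[r] f v = (-1) ^ r * (fwdDiff (-s))^[r] f (v + r * s) := by
  rw [fwdDiff_iter_eq_sum, fwdDiff_iter_eq_sum, ← sum_range_reflect, mul_sum]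
  refine sum_congr rfl fun k hk => ?_
  have hk' : k ≤ r := by simpa [Nat.lt_succ_iff] using hk
  rw [show r + 1 - 1 - k = r - k by omega, Nat.choose_symm hk', Nat.cast_sub hk',
    Nat.sub_sub_self hk', ← mul_assoc, ← mul_assoc, ← pow_add,
    show r + (r - k) = 2 * (r - k) + k by omega, pow_add, pow_mul]
  ring_nf

lemma abs_ditzSymmDiff_le {f : ℝ → ℝ} {F : ℝ} (hF : ∀ y ∈ Set.Icc (0 : ℝ) 1, |f y| ≤ F)
    (r : ℕ) (h x : ℝ) (hh : 0 ≤ h) : |ditzSymmDiff r h f x| ≤ 2 ^ r * F := by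
  have hF0 : 0 ≤ F := (abs_nonneg _).trans (hF 0 (by simp))
  unfold ditzSymmDiff
  split_ifs with hx
  · refine (abs_sum_le_sum_abs _ _).trans ?_
    rw [← Nat.cast_ofNat (R := ℝ), ← Nat.cast_pow, ← Nat.sum_range_choose, Nat.cast_sum, sum_mul]
    refine sum_le_sum fun k hk => ?_
    have hk' : (k : ℝ) ≤ r := by exact_mod_cast (by simpa [Nat.lt_succ_iff] using hk : k ≤ r)
    rw [abs_mul, abs_mul, abs_pow, abs_neg, abs_one, one_pow, one_mul, Nat.abs_cast]
    refine mul_le_mul_of_nonneg_left (hF _ ⟨?_, ?_⟩) (Nat.cast_nonneg _)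
    · nlinarith [hx.1.1, mul_le_mul_of_nonneg_right hk' hh]
    · nlinarith [hx.2.2, mul_nonneg (Nat.cast_nonneg (α := ℝ) k) hh]
  · rw [abs_zero]
    positivity

lemma dtMod_nonneg (r : ℕ) (f : ℝ → ℝ) (t : ℝ) : 0 ≤ dtMod r f t := by
  refine Real.sSup_nonneg ?_
  rintro y ⟨h, x, -, -, -, rfl⟩
  exact abs_nonneg _

lemma abs_ditzSymmDiff_le_dtMod {f : ℝ → ℝ} {F : ℝ} (hF : ∀ y ∈ Set.Icc (0 : ℝ) 1, |f y| ≤ F)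
    (r : ℕ) {h x t : ℝ} (hh : 0 < h) (ht : h ≤ t) (hx : x ∈ Set.Icc (0 : ℝ) 1) :
    |ditzSymmDiff r (h * √(x * (1 - x))) f x| ≤ dtMod r f t := by
  refine le_csSup ⟨2 ^ r * F, ?_⟩ ⟨h, x, hh, ht, hx, rfl⟩
  rintro y ⟨h, x, hh, -, -, rfl⟩
  exact abs_ditzSymmDiff_le hF r _ _ (by positivity)

lemma weightedDiffBdd_dtMod {m n : ℕ} (hm : 1 ≤ m) (hn : 1 ≤ n) {f : ℝ → ℝ} {F : ℝ}
    (hF : ∀ y ∈ Set.Icc (0 : ℝ) 1, |f y| ≤ F) :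
    WeightedDiffBdd m n f (dtMod (2 * m) f (1 / √n)) := by
  have hpos : ∀ v s : ℝ, 0 < s → v ∈ Set.Icc (0 : ℝ) 1 →
      v + (2 * m : ℕ) * s ∈ Set.Icc (0 : ℝ) 1 → s ^ 2 * n ≤ (v + m * s) * (1 - (v + m * s)) →
        |(fwdDiff s)^[2 * m] f v| ≤ dtMod (2 * m) f (1 / √n) := by
    intro v s hs hv hvs hsn
    have hn0 : (0 : ℝ) < n := by exact_mod_cast hn
    set u := v + m * s with hu
    have hφ : 0 < u * (1 - u) := lt_of_lt_of_le (by positivity) hsn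
    have hφ' := Real.sqrt_pos.2 hφ
    have hms : 0 ≤ m * s := by positivity
    have hl : u - (2 * m : ℕ) * s / 2 = v := by rw [hu]; push_cast; ring
    have hr : u + (2 * m : ℕ) * s / 2 = v + (2 * m : ℕ) * s := by rw [hu]; push_cast; ring
    have h := abs_ditzSymmDiff_le_dtMod hF (2 * m) (h := s / √(u * (1 - u))) (x := u)
      (t := 1 / √n) (by positivity) (by
        rw [div_le_div_iff₀ hφ' (Real.sqrt_pos.2 hn0), one_mul]
        refine Real.le_sqrt_of_sq_le ?_
        rwa [mul_pow, Real.sq_sqrt hn0.le])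
      ⟨by linarith [hv.1], by push_cast at hvs; linarith [hvs.2]⟩
    rwa [div_mul_cancel₀ _ hφ'.ne', ditzSymmDiff_eq_fwdDiff_iter (by rwa [hl]) (by rwa [hr]), hl]
      at h
  intro v s hv hvs hsn
  rcases lt_trichotomy s 0 with hs | rfl | hs
  · rw [fwdDiff_iter_neg, abs_mul, abs_pow, abs_neg, abs_one, one_pow, one_mul]
    refine hpos _ _ (neg_pos.2 hs) hvs (by rwa [mul_neg, add_neg_cancel_right]) ?_
    rw [neg_sq, show v + (2 * m : ℕ) * s + m * -s = v + m * s by push_cast; ring]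
    exact hsn
  · obtain ⟨r, hr⟩ : ∃ r, 2 * m = r + 1 := ⟨2 * m - 1, by omega⟩
    have h0 : fwdDiff (0 : ℝ) ((fwdDiff (0 : ℝ))^[r] f) v = 0 := by simp [fwdDiff]
    rw [hr, Function.iterate_succ_apply', h0, abs_zero]
    exact dtMod_nonneg _ _ _
  · exact hpos v s hs hv hvs hsn

lemma bootIter_congr (n : ℕ) {f g : ℝ → ℝ} (h : Set.EqOn f g (Set.Icc 0 1)) (m : ℕ) :
    Set.EqOn (bootIter n f m) (bootIter n g m) (Set.Icc 0 1) := by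
  induction m with
  | zero => exact h
  | succ m ih =>
    intro x hx
    simp only [bootIter, bernstein']
    rw [ih hx]
    congr 1
    exact sum_congr rfl fun k hk => by rw [ih (natCast_div_mem_Icc hk)]

lemma ditzSymmDiff_congr {f g : ℝ → ℝ} (hfg : Set.EqOn f g (Set.Icc 0 1)) (r : ℕ) {h : ℝ}
    (hh : 0 ≤ h) (x : ℝ) : ditzSymmDiff r h f x = ditzSymmDiff r h g x := by
  unfold ditzSymmDiff
  split_ifs with hx
  · refine sum_congr rfl fun k hk => ?_
    have hk' : (k : ℝ) ≤ r := by exact_mod_cast (by simpa [Nat.lt_succ_iff] using hk : k ≤ r)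
    rw [hfg ⟨?_, ?_⟩]
    · nlinarith [hx.1.1, mul_le_mul_of_nonneg_right hk' hh]
    · nlinarith [hx.2.2, mul_nonneg (Nat.cast_nonneg (α := ℝ) k) hh]
  · rfl

lemma dtMod_congr {f g : ℝ → ℝ} (hfg : Set.EqOn f g (Set.Icc 0 1)) (r : ℕ) (t : ℝ) :
    dtMod r f t = dtMod r g t := by
  unfold dtMod
  congr 1
  ext y
  refine exists_congr fun h => exists_congr fun x => and_congr_right fun hh => ?_
  rw [ditzSymmDiff_congr hfg r (by positivity)]

lemma abs_le_supAbsOn {f : ℝ → ℝ} (hf : ContinuousOn f (Set.Icc 0 1)) {y : ℝ}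
    (hy : y ∈ Set.Icc (0 : ℝ) 1) : |f y| ≤ supAbsOn f :=
  le_csSup (isCompact_Icc.image_of_continuousOn hf.abs).bddAbove ⟨y, hy, rfl⟩

end

/-- the bootstrap bias after `m−1` rounds satisfies
`‖(I−B_n)^m f‖ ≤ c (ω_φ^{2m}(f,1/√n) + ‖f‖ n^{−m})` for all `f ∈ C[0,1]` and `n ≥ 1`. -/
theorem bootstrap_bias_upper (m : ℕ) (hm : 1 ≤ m) :
    ∃ c > 0, ∀ f : ℝ → ℝ, ContinuousOn f (Set.Icc 0 1) → ∀ n : ℕ, 1 ≤ n →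
      supAbsOn (bootIter n f m) ≤
        c * (dtMod (2 * m) f (1 / Real.sqrt n) + supAbsOn f / (n : ℝ) ^ m) := by
  obtain ⟨K, hK, h⟩ := exists_abs_bootIter_le_of_weightedDiffBdd hm
  refine ⟨K + 1, by positivity, fun f hf n hn => ?_⟩
  set g : ℝ → ℝ := Set.IccExtend zero_le_one ((Set.Icc (0 : ℝ) 1).domRestrict f)
  have hg : Continuous g := hf.domRestrict.Icc_extend'
  have hfg : Set.EqOn f g (Set.Icc 0 1) := fun y hy => by
    simp [g, Set.IccExtend_of_mem _ _ hy, Set.domRestrict]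
  have hF : ∀ y ∈ Set.Icc (0 : ℝ) 1, |g y| ≤ supAbsOn f := fun y hy => by
    rw [← hfg hy]
    exact abs_le_supAbsOn hf hy
  have hF0 : 0 ≤ supAbsOn f := (abs_nonneg _).trans (hF 0 (by simp))
  have hω := dtMod_nonneg (2 * m) g (1 / √n)
  refine csSup_le ((Set.nonempty_Icc.2 zero_le_one).image _) ?_
  rintro _ ⟨x, hx, rfl⟩
  simp only [bootIter_congr n hfg m hx, dtMod_congr hfg]
  refine (h hn hg hω hF (weightedDiffBdd_dtMod hm hn hF) x hx).trans ?_
  exact mul_le_mul_of_nonneg_right (by linarith) (by positivity)
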